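/- arXiv:1602.02719 — 3 statements merged into one kernel-verified Lean document; each statement's English description precedes it below -/
import Mathlib

section
/- Let k ≥ 2 and n ≥ 1. Every A ∈ L_n^k contains a monotone subsequence of length at least ⌊√(n / (3(k−1)))⌋. -/
open scoped Classical

/-- `A : [n]^{k+1} → {0,1}` is an order-`n` `k`-dimensional permutation if every
line (obtained by fixing all coordinates but one) contains exactly one `1`. -/
def IsHDPerm (n k : ℕ) (A : (Fin (k + 1) → Fin n) → Bool) : Prop :=
  ∀ (j : Fin (k + 1)) (x : Fin (k + 1) → Fin n),
    ∃! t : Fin n, A (Function.update x j t) = true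

/-- `L_n^k`: the finite set of order-`n` `k`-dimensional permutations. -/
noncomputable def HDPerms (n k : ℕ) : Finset ((Fin (k + 1) → Fin n) → Bool) :=
  Finset.univ.filter (fun A => IsHDPerm n k A)

/-- A monotone subsequence of length `m` in `A`: a sequence of `m` support
positions that is strictly monotone (in some direction) in every coordinate. -/
def IsMonoSub (n k m : ℕ) (A : (Fin (k + 1) → Fin n) → Bool)
    (α : Fin m → (Fin (k + 1) → Fin n)) : Prop :=
  (∀ i, A (α i) = true) ∧
    ∀ j : Fin (k + 1), StrictMono (fun i => α i j) ∨ StrictAnti (fun i => α i j)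

/-- `H(A)`: the maximum length of a monotone subsequence of `A`. -/
noncomputable def HLen (n k : ℕ) (A : (Fin (k + 1) → Fin n) → Bool) : ℕ :=
  sSup {m : ℕ | ∃ α : Fin m → (Fin (k + 1) → Fin n), IsMonoSub n k m A α}

/-- The strict partial order `<_c` on `[n]^{k+1}` induced by `c ∈ {0,1}^{k+1}`. -/
def cLT {n k : ℕ} (c : Fin (k + 1) → Bool) (x y : Fin (k + 1) → Fin n) : Prop :=
  ∀ i, if c i then x i < y i else y i < x i

/-- A `<_c`-monotone subsequence of length `m` in `A`: a `<_c`-chain of `m`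
support positions. -/
def IsCMonoSub (n k m : ℕ) (c : Fin (k + 1) → Bool)
    (A : (Fin (k + 1) → Fin n) → Bool) (α : Fin m → (Fin (k + 1) → Fin n)) : Prop :=
  (∀ i, A (α i) = true) ∧ ∀ i j : Fin m, i < j → cLT c (α i) (α j)

theorem height_aux {X : Type*} (R : X → X → Prop) (htr : ∀ x y z, R x y → R y z → R x z) :
    ∀ (m : ℕ) (p : X → Prop),
      (¬ ∃ α : Fin (m + 1) → X, (∀ i, p (α i)) ∧ ∀ i j, i < j → R (α i) (α j)) →
      ∃ h : X → ℕ, (∀ x, p x → h x < m) ∧ ∀ x y, p x → p y → R x y → h x < h y := by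
  intro m
  induction m with
  | zero =>
    intro p hp
    have hne : ∀ x, ¬ p x := by
      intro x hx
      apply hp
      refine ⟨fun _ => x, fun _ => hx, ?_⟩
      intro i j hij
      omega
    exact ⟨fun _ => 0, fun x hx => absurd hx (hne x), fun x y hx => absurd hx (hne x)⟩
  | succ m ih =>
    intro p hp
    obtain ⟨h, h1, h2⟩ := ih (fun x => p x ∧ ∃ y, p y ∧ R y x) (by
      rintro ⟨α, ha, hb⟩
      obtain ⟨y, hy, hyR⟩ := (ha 0).2
      apply hp
      refine ⟨Fin.cons y α, ?_, ?_⟩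
      · intro i
        refine Fin.cases ?_ ?_ i
        · simpa using hy
        · intro i; simpa using (ha i).1
      · intro i j
        refine Fin.cases ?_ ?_ j
        · intro hij; exact absurd hij (Fin.not_lt_zero i)
        · intro j
          refine Fin.cases ?_ ?_ i
          · intro _
            simp only [Fin.cons_zero, Fin.cons_succ]
            by_cases hj : j = 0
            · rw [hj]; exact hyR
            · exact htr _ _ _ hyR (hb 0 j (Fin.pos_iff_ne_zero.2 hj))
          · intro i hij
            simp only [Fin.cons_succ]
            exact hb i j (by simpa using hij))
    refine ⟨fun x => if ∃ y, p y ∧ R y x then h x + 1 else 0, ?_, ?_⟩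
    · intro x hx
      dsimp only
      split_ifs with hc
      · have := h1 x ⟨hx, hc⟩; omega
      · omega
    · intro x y hx hy hxy
      have hc : ∃ z, p z ∧ R z y := ⟨x, hx, hxy⟩
      dsimp only
      rw [if_pos hc]
      split_ifs with hd
      · have := h2 x y ⟨hx, hd⟩ ⟨hy, hc⟩ hxy; omega
      · omega

theorem count_aux (n K m : ℕ) (hn : 1 ≤ n) (f : (Fin (K + 1) → Fin n) → Fin n)
    (hf : ∀ x y, f x = f y → Fin.tail x = Fin.tail y → x = y)
    (h1 h2 : (Fin (K + 1) → Fin n) → ℕ) (b1 : ∀ x, h1 x < m) (b2 : ∀ x, h2 x < m)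
    (c1 : ∀ x y, (∀ i, x i < y i) → f x < f y → h1 x < h1 y)
    (c2 : ∀ x y, (∀ i, x i < y i) → f y < f x → h2 x < h2 y) :
    n ≤ m * m * (K + 2) := by
  have hcl : ∀ x y, (∀ i, x i < y i) → h1 x = h1 y → h2 x = h2 y → f x = f y := by
    intro x y hxy e1 e2
    rcases lt_trichotomy (f x) (f y) with h | h | h
    · have := c1 x y hxy h; omega
    · exact h
    · have := c2 x y hxy h; omega
  let N : (Fin (K + 1) → Fin n) → Prop := fun x =>
    ∃ y, (∀ i, y i < x i) ∧ h1 y = h1 x ∧ h2 y = h2 x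
  have hmin : ∀ x : Fin (K + 1) → Fin n, ∃ i, ∀ j, x i ≤ x j := fun x => Finite.exists_min x
  choose a ha using hmin
  let g : (Fin (K + 1) → Fin n) → Option (Fin (K + 1)) × (Fin K → Fin n) := fun x =>
    if N x then (none, Fin.tail x)
    else (some (a x), fun j => ⟨(x ((a x).succAbove j)).1 - (x (a x)).1, by omega⟩)
  let G : (Fin (K + 1) → Fin n) → (Fin m × Fin m) × (Option (Fin (K + 1)) × (Fin K → Fin n)) :=
    fun x => ((⟨h1 x, b1 x⟩, ⟨h2 x, b2 x⟩), g x)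
  have key : ∀ x y, h1 x = h1 y → h2 x = h2 y → ¬ N x → ¬ N y → g x = g y → 
      ¬ (x (a x) < y (a y)) := by
    intro x y e1 e2 nx ny hg hlt
    simp only [g, if_neg nx, if_neg ny, Prod.mk.injEq, Option.some.injEq] at hg
    obtain ⟨ea, eg⟩ := hg
    apply ny
    refine ⟨x, ?_, e1, e2⟩
    intro i
    rcases Fin.eq_self_or_eq_succAbove (a x) i with h | ⟨j, h⟩
    · rw [h]; rw [← ea] at hlt; exact hlt
    · have := congrArg Fin.val (congrFun eg j)
      dsimp only at this
      have q1 := ha x i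
      have q2 := ha y i
      rw [← ea, ← h] at this
      rw [← ea] at q2 hlt
      simp only [Fin.lt_def, Fin.le_def] at *
      omega
  have hG : Function.Injective G := by
    intro x y hxy
    simp only [G, Prod.mk.injEq, Fin.mk.injEq] at hxy
    obtain ⟨⟨e1, e2⟩, hg⟩ := hxy
    by_cases nx : N x <;> by_cases ny : N y
    · have ht : Fin.tail x = Fin.tail y := by
        simpa only [g, if_pos nx, if_pos ny, Prod.mk.injEq, true_and] using hg
      -- wlog on the zeroth coordinate
      have main : ∀ x y, h1 x = h1 y → h2 x = h2 y → N x → N y → Fin.tail x = Fin.tail y →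
          x 0 ≤ y 0 → f x = f y := by
        rintro x y e1 e2 ⟨z, hz, z1, z2⟩ _ ht h0
        rw [← hcl z x hz z1 z2]
        refine hcl z y ?_ (z1.trans e1) (z2.trans e2)
        intro i
        refine Fin.cases ?_ ?_ i
        · exact lt_of_lt_of_le (hz 0) h0
        · intro j
          have := congrFun ht j
          simp only [Fin.tail] at this
          rw [← this]; exact hz _
      apply hf x y _ ht
      rcases le_total (x 0) (y 0) with h | h
      · exact main x y e1 e2 nx ny ht h
      · exact (main y x e1.symm e2.symm ny nx ht.symm h).symm
    · simp [g, nx, ny] at hg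
    · simp [g, nx, ny] at hg
    · have k1 := key x y e1 e2 nx ny hg
      have k2 := key y x e1.symm e2.symm ny nx hg.symm
      simp only [g, if_neg nx, if_neg ny, Prod.mk.injEq, Option.some.injEq] at hg
      obtain ⟨ea, eg⟩ := hg
      rw [← ea] at k1 k2
      have k3 : x (a x) = y (a x) := le_antisymm (not_lt.1 k2) (not_lt.1 k1)
      funext i
      rcases Fin.eq_self_or_eq_succAbove (a x) i with h | ⟨j, h⟩
      · rw [h]; exact k3
      · have := congrArg Fin.val (congrFun eg j)
        dsimp only at this
        have q1 := ha x i
        have q2 := ha y i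
        rw [← ea, ← h] at this
        rw [← ea] at q2
        rw [k3] at this q1
        apply Fin.ext
        simp only [Fin.le_def] at *
        omega
  have hc := Fintype.card_le_of_injective G hG
  simp only [Fintype.card_prod, Fintype.card_option, Fintype.card_fin, Fintype.card_pi,
    Finset.prod_const, Finset.card_univ] at hc
  have hpos : 0 < n ^ K := by positivity
  refine Nat.le_of_mul_le_mul_right (c := n ^ K) ?_ hpos
  calc n * n ^ K = n ^ (K + 1) := by ring
    _ ≤ _ := hc
    _ = _ := by ring

theorem hd_erdos_szekeres_lower (n k : ℕ) (hk : 2 ≤ k) (hn : 1 ≤ n)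
    (A : (Fin (k + 1) → Fin n) → Bool) (hA : IsHDPerm n k A) :
    ∃ α : Fin (Nat.sqrt (n / (3 * (k - 1)))) → (Fin (k + 1) → Fin n),
      IsMonoSub n k (Nat.sqrt (n / (3 * (k - 1)))) A α := by
  obtain ⟨K, rfl⟩ : ∃ K, k = K + 1 := ⟨k - 1, by omega⟩
  have hex : ∀ x : Fin (K + 1) → Fin n, ∃ t : Fin n,
      A (Fin.snoc (α := fun _ => Fin n) x t) = true := by
    intro x
    obtain ⟨t, ht, -⟩ := hA (Fin.last _) (Fin.snoc (α := fun _ => Fin n) x ⟨0, hn⟩)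
    exact ⟨t, by rw [Fin.update_snoc_last] at ht; exact ht⟩
  choose f hfA using hex
  have hf : ∀ x y, f x = f y → Fin.tail x = Fin.tail y → x = y := by
    intro x y e ht
    have hu := (hA (Fin.castSucc 0) (Fin.snoc (α := fun _ => Fin n) x (f x))).unique
      (y₁ := x 0) (y₂ := y 0)
    have hy : y = Function.update x 0 (y 0) := by
      funext i
      refine Fin.cases ?_ ?_ i
      · simp
      · intro j
        have := congrFun ht j
        simp only [Fin.tail] at this
        simp [this]
    have h0 : x 0 = y 0 := by
      apply hu
      · rw [← Fin.snoc_update, Function.update_eq_self]; exact hfA x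
      · rw [← Fin.snoc_update, ← hy, e]; exact hfA y
    rw [hy, ← h0, Function.update_eq_self]
  have hs := Nat.sqrt_le (n / (3 * (K + 1 - 1)))
  generalize Nat.sqrt (n / (3 * (K + 1 - 1))) = m at hs ⊢
  have hm : m * m * (3 * K) ≤ n := by
    refine le_trans (Nat.mul_le_mul_right _ hs) ?_
    simpa using Nat.div_mul_le_self n (3 * K)
  by_contra hcon
  have hmono : ∀ β : Fin m → (Fin (K + 1) → Fin n), (∀ i j, i < j → ∀ l, β i l < β j l) →
      ((∀ i j, i < j → f (β i) < f (β j)) ∨ (∀ i j, i < j → f (β j) < f (β i))) → False := by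
    intro β hβ hor
    apply hcon
    refine ⟨fun i => Fin.snoc (α := fun _ => Fin n) (β i) (f (β i)), fun i => hfA _, ?_⟩
    intro j
    refine Fin.lastCases ?_ ?_ j
    · simp only [Fin.snoc_last]
      rcases hor with h | h
      · left; intro i j hij; exact h i j hij
      · right; intro i j hij; exact h i j hij
    · intro l
      simp only [Fin.snoc_castSucc]
      left; intro i j hij; exact hβ i j hij l
  obtain _ | m := m
  · exact hmono (fun i => i.elim0) (fun i => i.elim0) (Or.inl fun i => i.elim0)
  obtain ⟨h1, b1, c1⟩ := height_aux
    (fun x y : Fin (K + 1) → Fin n => (∀ i, x i < y i) ∧ f x < f y)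
    (fun x y z h h' => ⟨fun i => (h.1 i).trans (h'.1 i), h.2.trans h'.2⟩) m (fun _ => True) (by
      rintro ⟨α, -, h⟩
      exact hmono α (fun i j hij => (h i j hij).1) (Or.inl fun i j hij => (h i j hij).2))
  obtain ⟨h2, b2, c2⟩ := height_aux
    (fun x y : Fin (K + 1) → Fin n => (∀ i, x i < y i) ∧ f y < f x)
    (fun x y z h h' => ⟨fun i => (h.1 i).trans (h'.1 i), h'.2.trans h.2⟩) m (fun _ => True) (by
      rintro ⟨α, -, h⟩
      exact hmono α (fun i j hij => (h i j hij).1) (Or.inr fun i j hij => (h i j hij).2))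
  have hfin := count_aux n K m hn f hf h1 h2 (fun x => b1 x trivial) (fun x => b2 x trivial)
    (fun x y h h' => c1 x y trivial trivial ⟨h, h'⟩)
    (fun x y h h' => c2 x y trivial trivial ⟨h, h'⟩)
  have hle : m * m * (K + 2) ≤ m * m * (3 * K) := Nat.mul_le_mul_left _ (by omega)
  have hK : 1 ≤ K := by omega
  nlinarith [Nat.zero_le (m * K)]
end

section
/- Fix k ≥ 1 and ε > 0. As n → ∞, the fraction of A ∈ L_n^k satisfying (1/(k+2)) · n^{k/(k+1)} ≤ H(A) ≤ (e + ε) · n^{k/(k+1)} tends to 1. In other words, asymptotically almost surely a uniformly random A ∈ L_n^k satisfies H(A)·n^{-k/(k+1)} ∈ [1/(k+2), e + ε]. -/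
open scoped Classical

def hdAct {n k : ℕ} (π : Fin (k + 1) → Equiv.Perm (Fin n))
    (A : (Fin (k + 1) → Fin n) → Bool) : (Fin (k + 1) → Fin n) → Bool :=
  fun x => A (fun j => π j (x j))

lemma hdAct_isHDPerm {n k : ℕ} (π : Fin (k + 1) → Equiv.Perm (Fin n))
    {A : (Fin (k + 1) → Fin n) → Bool} (hA : IsHDPerm n k A) : IsHDPerm n k (hdAct π A) := by
  intro j x
  have key : ∀ t, (fun i => π i (Function.update x j t i))
      = Function.update (fun i => π i (x i)) j (π j t) := by
    intro t
    funext i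
    by_cases h : i = j
    · subst h; simp
    · simp [h]
  obtain ⟨t, ht, hu⟩ := hA j (fun i => π i (x i))
  refine ⟨(π j).symm t, ?_, ?_⟩
  · simp only [hdAct, key]
    simpa using ht
  · intro t' ht'
    simp only [hdAct, key] at ht'
    have := hu _ ht'
    rw [← this]; simp

lemma hdAct_mem {n k : ℕ} (π : Fin (k + 1) → Equiv.Perm (Fin n))
    {A : (Fin (k + 1) → Fin n) → Bool} (hA : A ∈ HDPerms n k) : hdAct π A ∈ HDPerms n k := by
  simp only [HDPerms, Finset.mem_filter, Finset.mem_univ, true_and] at *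
  exact hdAct_isHDPerm π hA

lemma hdAct_symm {n k : ℕ} (π : Fin (k + 1) → Equiv.Perm (Fin n))
    (A : (Fin (k + 1) → Fin n) → Bool) : hdAct (fun j => (π j).symm) (hdAct π A) = A := by
  funext x; simp [hdAct]

lemma hdAct_symm' {n k : ℕ} (π : Fin (k + 1) → Equiv.Perm (Fin n))
    (A : (Fin (k + 1) → Fin n) → Bool) : hdAct π (hdAct (fun j => (π j).symm) A) = A := by
  funext x; simp [hdAct]

lemma card_filter_hdAct {n k : ℕ} (π : Fin (k + 1) → Equiv.Perm (Fin n))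
    (P : ((Fin (k + 1) → Fin n) → Bool) → Prop) [DecidablePred P]
    [DecidablePred (fun A => P (hdAct π A))] :
    ((HDPerms n k).filter (fun A => P (hdAct π A))).card = ((HDPerms n k).filter P).card := by
  apply Finset.card_bij' (fun A _ => hdAct π A) (fun A _ => hdAct (fun j => (π j).symm) A)
  · intro A hA
    rw [Finset.mem_filter] at *
    exact ⟨hdAct_mem π hA.1, hA.2⟩
  · intro A hA
    rw [Finset.mem_filter] at *
    exact ⟨hdAct_mem _ hA.1, by rw [hdAct_symm']; exact hA.2⟩
  · intro A _; exact hdAct_symm π A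
  · intro A _; exact hdAct_symm' π A

lemma mem_HDPerms {n k : ℕ} {A : (Fin (k + 1) → Fin n) → Bool} :
    A ∈ HDPerms n k ↔ IsHDPerm n k A := by simp [HDPerms]

lemma HDPerms_pos (n k : ℕ) (hn : 1 ≤ n) : 0 < (HDPerms n k).card := by
  have : NeZero n := ⟨by omega⟩
  refine Finset.card_pos.mpr ⟨fun x => decide (∑ i, x i = 0), ?_⟩
  rw [mem_HDPerms]
  intro j x
  refine ⟨- ∑ i ∈ Finset.univ.erase j, x i, ?_, ?_⟩
  · simp [Finset.sum_update_of_mem, Finset.sdiff_singleton_eq_erase]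
  · intro t ht
    simp only [decide_eq_true_eq, Finset.sum_update_of_mem (Finset.mem_univ j),
      Finset.sdiff_singleton_eq_erase] at ht
    exact eq_neg_of_add_eq_zero_left ht

/-- number of `A` containing a given tuple. -/
lemma tuple_count_eq {n k m : ℕ} (e e' : Fin (k + 1) → (Fin m ↪ Fin n)) :
    ((HDPerms n k).filter (fun A => ∀ i, A (fun j => e j i) = true)).card
      = ((HDPerms n k).filter (fun A => ∀ i, A (fun j => e' j i) = true)).card := by
  have : ∀ j, ∃ σ : Equiv.Perm (Fin n), ∀ i, σ (e' j i) = e j i := by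
    intro j
    have h := (Equiv.Perm.isMultiplyPretransitive (Fin n) m).exists_smul_eq (e' j) (e j)
    obtain ⟨σ, hσ⟩ := h
    exact ⟨σ, fun i => by rw [← hσ]; rfl⟩
  choose π hπ using this
  rw [← card_filter_hdAct π (fun A => ∀ i, A (fun j => e' j i) = true)]
  simp only [hdAct, hπ]

lemma tuple_sum_le {n k m : ℕ} :
    ∑ e : Fin (k + 1) → (Fin m ↪ Fin n),
      ((HDPerms n k).filter (fun A => ∀ i, A (fun j => e j i) = true)).card
      ≤ (HDPerms n k).card * (n ^ k) ^ m := by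
  simp only [Finset.card_filter]
  rw [Finset.sum_comm, ← smul_eq_mul]
  apply Finset.sum_le_card_nsmul
  intro A hA
  rw [mem_HDPerms] at hA
  rw [← Finset.card_filter]
  have hc : Fintype.card (Fin m → Fin k → Fin n) = (n ^ k) ^ m := by simp
  rw [← hc, ← Finset.card_univ]
  apply Finset.card_le_card_of_injOn (fun e i j => e j.succ i) (by simp)
  intro e he e' he' h
  simp only [Finset.coe_filter, Finset.mem_univ, true_and, Set.mem_ofPred_eq] at he he'
  have h1 : ∀ (i : Fin m) (j : Fin k), e j.succ i = e' j.succ i := fun i j => by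
    have := congrFun (congrFun h i) j
    simpa using this
  funext j
  ext1 i
  refine Fin.cases ?_ (fun j => h1 i j) j
  have e1 : (fun j => e j i) = Function.update (fun j => e j i) 0 (e 0 i) := by simp
  have e2 : (fun j => e' j i) = Function.update (fun j => e j i) 0 (e' 0 i) := by
    funext j
    refine Fin.cases (by simp) (fun j => ?_) j
    simp [h1 i j]
  have a1 := he i
  have a2 := he' i
  rw [e1] at a1
  rw [e2] at a2
  exact (hA 0 _).unique a1 a2

lemma tuple_count_le {n k m : ℕ} (e : Fin (k + 1) → (Fin m ↪ Fin n)) :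
    ((HDPerms n k).filter (fun A => ∀ i, A (fun j => e j i) = true)).card
      * (n.descFactorial m) ^ (k + 1) ≤ (HDPerms n k).card * (n ^ k) ^ m := by
  refine le_trans (le_of_eq ?_) (tuple_sum_le (n := n) (k := k) (m := m))
  rw [Finset.sum_congr rfl (fun e' _ => tuple_count_eq e' e)]
  simp [Fintype.card_embedding_eq, mul_comm]

lemma card_orderEmb_le (m n : ℕ) : Fintype.card (Fin m ↪o Fin n) ≤ n.choose m := by
  have hc : (Finset.powersetCard m (Finset.univ : Finset (Fin n))).card = n.choose m := by
    simp
  rw [← hc, ← Finset.card_univ]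
  apply Finset.card_le_card_of_injOn (fun f => Finset.univ.map f.toEmbedding)
  · intro f _
    simp [Finset.mem_powersetCard]
  · intro f _ g _ h
    have h2 : Set.range f = Set.range g := by
      have := congrArg (fun s : Finset (Fin n) => (s : Set (Fin n))) h
      simpa using this
    apply RelEmbedding.coe_fn_injective
    exact (f.strictMono.range_inj g.strictMono).1 h2

lemma upper_count (n k m : ℕ) :
    ((HDPerms n k).filter (fun A => ∃ α, IsMonoSub n k m A α)).card * (m.factorial) ^ (k + 1)
      ≤ 2 ^ (k + 1) * ((HDPerms n k).card * (n ^ k) ^ m) := by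
  let E : (Fin (k + 1) → Bool) → (Fin (k + 1) → (Fin m ↪o Fin n)) →
      (Fin (k + 1) → (Fin m ↪ Fin n)) := fun c o j =>
      if c j then (o j).toEmbedding else Fin.revPerm.toEmbedding.trans (o j).toEmbedding
  have hsub : (HDPerms n k).filter (fun A => ∃ α, IsMonoSub n k m A α) ⊆
      (Finset.univ : Finset ((Fin (k + 1) → Bool) × (Fin (k + 1) → (Fin m ↪o Fin n)))).biUnion
        (fun co => (HDPerms n k).filter (fun A => ∀ i, A (fun j => E co.1 co.2 j i) = true)) := by
    intro A hA
    rw [Finset.mem_filter] at hA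
    obtain ⟨hA, α, hα, hmono⟩ := hA
    have : ∀ j, ∃ (c : Bool) (o : Fin m ↪o Fin n), ∀ i,
        (if c then o.toEmbedding else Fin.revPerm.toEmbedding.trans o.toEmbedding) i = α i j := by
      intro j
      rcases hmono j with h | h
      · exact ⟨true, OrderEmbedding.ofStrictMono _ h, fun i => by simp⟩
      · refine ⟨false, OrderEmbedding.ofStrictMono (fun i => α (Fin.rev i) j)
          (fun a b hab => h (Fin.rev_lt_rev.mpr hab)), fun i => ?_⟩
        change α (Fin.rev (Fin.rev i)) j = _
        rw [Fin.rev_rev]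
    choose c o hco using this
    simp only [Finset.mem_biUnion, Finset.mem_univ, true_and, Finset.mem_filter]
    refine ⟨(c, o), hA, fun i => ?_⟩
    rw [← hα i]
    congr 1
    funext j
    exact hco j i
  have h1 := (Finset.card_le_card hsub).trans Finset.card_biUnion_le
  calc _ ≤ (∑ co : (Fin (k + 1) → Bool) × (Fin (k + 1) → (Fin m ↪o Fin n)),
        ((HDPerms n k).filter (fun A => ∀ i, A (fun j => E co.1 co.2 j i) = true)).card)
        * (m.factorial) ^ (k + 1) := Nat.mul_le_mul_right _ h1
    _ ≤ _ := ?_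
  by_cases hmn : n < m
  · have : IsEmpty (Fin m ↪o Fin n) := by
      refine ⟨fun f => ?_⟩
      have := Fintype.card_le_of_injective f f.injective
      simp at this; omega
    simp
  push Not at hmn
  let e0 : Fin (k + 1) → (Fin m ↪ Fin n) := fun _ => Fin.castLEEmb hmn
  rw [Finset.sum_congr rfl (fun co _ => tuple_count_eq (E co.1 co.2) e0)]
  have h2 := tuple_count_le e0
  rw [Nat.descFactorial_eq_factorial_mul_choose, mul_pow] at h2
  have h3 : (Fintype.card (Fin m ↪o Fin n)) ^ (k + 1) ≤ (n.choose m) ^ (k + 1) :=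
    Nat.pow_le_pow_left (card_orderEmb_le m n) _
  simp only [Finset.sum_const, Finset.card_univ, Fintype.card_prod, Fintype.card_fun,
    Fintype.card_bool, Fintype.card_fin, smul_eq_mul]
  set Q := ((HDPerms n k).filter (fun A => ∀ i, A (fun j => e0 j i) = true)).card
  calc _ ≤ 2 ^ (k + 1) * (n.choose m) ^ (k + 1) * Q * (m.factorial) ^ (k + 1) := by gcongr
    _ = 2 ^ (k + 1) * (Q * (m.factorial ^ (k + 1) * (n.choose m) ^ (k + 1))) := by ring
    _ ≤ _ := by gcongr

/-- two distinct cells rarely have the same symbol -/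
lemma collision_count {n k : ℕ} (x y : Fin k → Fin n) (hxy : x ≠ y) :
    ((HDPerms n k).filter (fun A => ∃ v, A (Fin.cons v x) = true ∧ A (Fin.cons v y) = true)).card
      * (n - 1) ≤ (HDPerms n k).card := by
  obtain ⟨j, hj⟩ := Function.ne_iff.mp hxy
  let T : Fin n → Finset ((Fin (k + 1) → Fin n) → Bool) := fun w =>
    (HDPerms n k).filter (fun A => ∃ v, A (Fin.cons v x) = true ∧
      A (Fin.cons v (Function.update y j w)) = true)
  have hT : ∀ w, w ≠ x j → (T w).card = (T (y j)).card := by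
    intro w hw
    let π : Fin (k + 1) → Equiv.Perm (Fin n) :=
      Function.update (fun _ => Equiv.refl _) j.succ (Equiv.swap (y j) w)
    have hx : ∀ v, (fun i => π i ((Fin.cons v x : Fin (k + 1) → Fin n) i)) = Fin.cons v x := by
      intro v
      funext i
      refine Fin.cases ?_ (fun i => ?_) i
      · have : (0 : Fin (k + 1)) ≠ j.succ := (Fin.succ_ne_zero j).symm
        simp [π, this]
      · by_cases h : i = j
        · subst h
          simp only [π, Function.update_self, Fin.cons_succ]
          exact Equiv.swap_apply_of_ne_of_ne hj hw.symm
        · have : i.succ ≠ j.succ := by simpa using h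
          simp [π, this]
    have hy : ∀ v, (fun i => π i ((Fin.cons v (Function.update y j (y j)) : Fin (k + 1) → Fin n) i))
        = Fin.cons v (Function.update y j w) := by
      intro v
      funext i
      refine Fin.cases ?_ (fun i => ?_) i
      · have : (0 : Fin (k + 1)) ≠ j.succ := (Fin.succ_ne_zero j).symm
        simp [π, this]
      · by_cases h : i = j
        · subst h
          simp [π]
        · have : i.succ ≠ j.succ := by simpa using h
          simp [π, this, h]
    have := card_filter_hdAct π (fun A => ∃ v, A (Fin.cons v x) = true ∧
      A (Fin.cons v (Function.update y j (y j))) = true)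
    simp only [hdAct, hx, hy] at this
    exact this
  have hdisj : ∀ w ∈ (Finset.univ.erase (x j)), ∀ w' ∈ (Finset.univ.erase (x j)), w ≠ w' →
      Disjoint (T w) (T w') := by
    intro w _ w' _ hne
    rw [Finset.disjoint_left]
    intro A hA hA'
    rw [Finset.mem_filter] at hA hA'
    obtain ⟨hA, v, h1, h2⟩ := hA
    obtain ⟨_, v', h1', h2'⟩ := hA'
    rw [mem_HDPerms] at hA
    have hv : v = v' := by
      apply (hA 0 (Fin.cons v x)).unique
      · simpa using h1
      · simpa using h1'
    subst hv
    apply hne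
    apply (hA j.succ (Fin.cons v y)).unique
    · rw [← Fin.cons_update]; exact h2
    · rw [← Fin.cons_update]; exact h2'
  have hsum := Finset.card_biUnion hdisj
  rw [Finset.sum_congr rfl (fun w hw => hT w (Finset.ne_of_mem_erase hw))] at hsum
  simp only [Finset.sum_const, smul_eq_mul, Finset.card_erase_of_mem (Finset.mem_univ _),
    Finset.card_univ, Fintype.card_fin] at hsum
  have hle : ((Finset.univ.erase (x j)).biUnion T).card ≤ (HDPerms n k).card := by
    apply Finset.card_le_card
    intro A hA
    rw [Finset.mem_biUnion] at hA
    obtain ⟨w, _, hw⟩ := hA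
    exact (Finset.mem_filter.mp hw).1
  rw [hsum] at hle
  have e : T (y j) = (HDPerms n k).filter
      (fun A => ∃ v, A (Fin.cons v x) = true ∧ A (Fin.cons v y) = true) := by
    simp only [T, Function.update_eq_self]
  rw [e] at hle
  rw [mul_comm]; exact hle

lemma card_le_image_add_coll {X Y : Type*} [Fintype X] (f : X → Y) :
    Fintype.card X ≤ (Finset.univ.image f).card +
      ((Finset.univ : Finset (X × X)).filter (fun p => p.1 ≠ p.2 ∧ f p.1 = f p.2)).card := by
  rcases isEmpty_or_nonempty X with hX | hX
  · simp
  have hg : ∀ x, f (Function.invFun f (f x)) = f x := fun x => Function.invFun_eq ⟨x, rfl⟩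
  rw [← Finset.card_univ,
    ← Finset.card_filter_add_card_filter_not (fun x => Function.invFun f (f x) = x)]
  apply Nat.add_le_add
  · apply Finset.card_le_card_of_injOn f
    · intro x _; simp
    · intro x hx y hy h
      simp only [Finset.coe_filter, Finset.mem_univ, true_and, Set.mem_ofPred_eq] at hx hy
      rw [← hx, ← hy, h]
  · apply Finset.card_le_card_of_injOn (fun x => (x, Function.invFun f (f x)))
    · intro x hx
      simp only [Finset.coe_filter, Finset.mem_univ, true_and, Set.mem_ofPred_eq] at hx ⊢
      exact ⟨fun h => hx h.symm, (hg x).symm⟩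
    · intro x _ y _ h
      exact (Prod.ext_iff.mp h).1

/-- block positions -/
def bpos {n M s : ℕ} (h : s * M ≤ n) : (Fin M × Fin s) ↪ Fin n where
  toFun p := ⟨p.1 * s + p.2, by
    have h1 := p.1.2
    have h2 := p.2.2
    have : (p.1 + 1 : ℕ) * s ≤ M * s := Nat.mul_le_mul_right _ h1
    nlinarith⟩
  inj' := by
    intro p q hpq
    simp only [Fin.mk.injEq] at hpq
    have h1 := p.2.2
    have h2 := q.2.2
    have hs : 0 < s := by omega
    have e1 : (p.1 * s + p.2 : ℕ) / s = p.1 := by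
      rw [mul_comm, Nat.mul_add_div hs, Nat.div_eq_of_lt h1, add_zero]
    have e2 : (q.1 * s + q.2 : ℕ) / s = q.1 := by
      rw [mul_comm, Nat.mul_add_div hs, Nat.div_eq_of_lt h2, add_zero]
    have e : (p.1 : ℕ) = q.1 := by rw [← e1, ← e2, hpq]
    have e' : (p.2 : ℕ) = q.2 := by rw [e] at hpq; omega
    exact Prod.ext (Fin.ext e) (Fin.ext e')

lemma bpos_lt {n M s : ℕ} (h : s * M ≤ n) {i i' : Fin M} (c c' : Fin s) (hi : i < i') :
    bpos h (i, c) < bpos h (i', c') := by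
  rw [Fin.lt_def]
  change (i * s + c : ℕ) < i' * s + c'
  have h1 := c.2
  have : (i + 1 : ℕ) * s ≤ i' * s := Nat.mul_le_mul_right _ hi
  nlinarith

lemma perm_count_one {M : ℕ} (i u : Fin M) :
    (((Finset.univ : Finset (Equiv.Perm (Fin M))).filter (fun ρ => ρ i = u)).card : ℝ) * M
      = Fintype.card (Equiv.Perm (Fin M)) := by
  have heq : ∀ u' : Fin M, ((Finset.univ : Finset (Equiv.Perm (Fin M))).filter
      (fun ρ => ρ i = u')).card = ((Finset.univ : Finset (Equiv.Perm (Fin M))).filter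
      (fun ρ => ρ i = u)).card := by
    intro u'
    apply Finset.card_bij' (fun ρ _ => Equiv.swap u u' * ρ) (fun ρ _ => Equiv.swap u u' * ρ)
    · intro ρ h
      simp only [Finset.mem_filter, Finset.mem_univ, true_and] at h ⊢
      simp [h]
    · intro ρ h
      simp only [Finset.mem_filter, Finset.mem_univ, true_and] at h ⊢
      simp [h]
    · intro ρ _; simp
    · intro ρ _; simp
  have h := Finset.card_eq_sum_card_fiberwise (s := (Finset.univ : Finset (Equiv.Perm (Fin M))))
    (t := Finset.univ) (f := fun ρ => ρ i) (by intro x _; simp)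
  rw [Finset.sum_congr rfl (fun u' _ => heq u')] at h
  simp only [Finset.sum_const, Finset.card_univ, Fintype.card_fin, smul_eq_mul] at h
  rw [h]; push_cast; ring

lemma perm_count_two {M : ℕ} (hM : 2 ≤ M) (i j u v : Fin M) (hij : i ≠ j) :
    (((Finset.univ : Finset (Equiv.Perm (Fin M))).filter (fun ρ => ρ i = u ∧ ρ j = v)).card : ℝ)
      * (M * (M - 1)) ≤ Fintype.card (Equiv.Perm (Fin M)) := by
  by_cases huv : u = v
  · have : (Finset.univ : Finset (Equiv.Perm (Fin M))).filter (fun ρ => ρ i = u ∧ ρ j = v) = ∅ := by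
      apply Finset.filter_eq_empty_iff.mpr
      rintro ρ _ ⟨h1, h2⟩
      exact hij (ρ.injective (by rw [h1, h2, huv]))
    rw [this]; simp
  have heq : ∀ p ∈ (Finset.univ : Finset (Fin M)).offDiag,
      ((Finset.univ : Finset (Equiv.Perm (Fin M))).filter
      (fun ρ => (ρ i, ρ j) = p)).card = ((Finset.univ : Finset (Equiv.Perm (Fin M))).filter
      (fun ρ => ρ i = u ∧ ρ j = v)).card := by
    rintro ⟨u', v'⟩ hp
    simp only [Finset.mem_offDiag, Finset.mem_univ, true_and] at hp
    obtain ⟨g, hg1, hg2⟩ := (MulAction.is_two_pretransitive_iff (G := Equiv.Perm (Fin M)) (α := Fin M)).1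
      (Equiv.Perm.isMultiplyPretransitive (Fin M) 2) hp huv
    rw [Equiv.Perm.smul_def] at hg1 hg2
    apply Finset.card_bij' (fun ρ _ => g * ρ) (fun ρ _ => g⁻¹ * ρ)
    · intro ρ h
      simp only [Finset.mem_filter, Finset.mem_univ, true_and, Prod.mk.injEq] at h ⊢
      simp [h.1, h.2, hg1, hg2]
    · intro ρ h
      simp only [Finset.mem_filter, Finset.mem_univ, true_and, Prod.mk.injEq] at h ⊢
      simp [h.1, h.2, ← hg1, ← hg2]
    · intro ρ _; simp
    · intro ρ _; simp
  have h := Finset.card_eq_sum_card_fiberwise (s := (Finset.univ : Finset (Equiv.Perm (Fin M))))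
    (t := (Finset.univ : Finset (Fin M)).offDiag) (f := fun ρ => (ρ i, ρ j)) (by
      intro ρ _
      simp [hij])
  rw [Finset.sum_congr rfl heq] at h
  simp only [Finset.sum_const, Finset.offDiag_card, Finset.card_univ, Fintype.card_fin,
    smul_eq_mul] at h
  rw [h]
  rw [← Nat.mul_sub_one]
  push_cast [Nat.cast_sub (show 1 ≤ M by omega)]
  rw [mul_comm]

lemma perm_in_one {M : ℕ} (hM : 2 ≤ M) (i : Fin M) (B : Finset (Fin M)) :
    (((Finset.univ : Finset (Equiv.Perm (Fin M))).filter (fun ρ => ρ i ∈ B)).card : ℝ)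
      = Fintype.card (Equiv.Perm (Fin M)) * (B.card / M) := by
  have hM0 : (M : ℝ) ≠ 0 := by positivity
  have : (Finset.univ : Finset (Equiv.Perm (Fin M))).filter (fun ρ => ρ i ∈ B)
      = B.biUnion (fun u => Finset.univ.filter (fun ρ => ρ i = u)) := by
    ext ρ; simp
  rw [this, Finset.card_biUnion]
  · push_cast
    rw [Finset.sum_congr rfl (fun u _ => eq_div_of_mul_eq hM0 (perm_count_one i u))]
    simp; ring
  · intro u _ v _ huv
    refine Finset.disjoint_left.mpr ?_
    intro ρ h1 h2
    simp only [Finset.mem_filter, Finset.mem_univ, true_and] at h1 h2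
    exact huv (h1.symm.trans h2)

lemma perm_in_two {M : ℕ} (hM : 2 ≤ M) (i j : Fin M) (hij : i ≠ j) (B B' : Finset (Fin M)) :
    (((Finset.univ : Finset (Equiv.Perm (Fin M))).filter (fun ρ => ρ i ∈ B ∧ ρ j ∈ B')).card : ℝ)
      ≤ Fintype.card (Equiv.Perm (Fin M)) * (B.card * B'.card / (M * (M - 1))) := by
  have hM2 : (2 : ℝ) ≤ M := by exact_mod_cast hM
  have hM0 : (0 : ℝ) < M * (M - 1) := by nlinarith
  have : (Finset.univ : Finset (Equiv.Perm (Fin M))).filter (fun ρ => ρ i ∈ B ∧ ρ j ∈ B')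
      = (B ×ˢ B').biUnion (fun p => Finset.univ.filter (fun ρ => ρ i = p.1 ∧ ρ j = p.2)) := by
    ext ρ; simp
  rw [this]
  refine le_trans (Nat.cast_le.mpr Finset.card_biUnion_le) ?_
  push_cast
  refine le_trans (Finset.sum_le_sum
    (fun p _ => (le_div_iff₀ hM0).mpr (perm_count_two hM i j p.1 p.2 hij))) ?_
  apply le_of_eq
  simp; ring

lemma perm_out_one {M : ℕ} (hM : 2 ≤ M) (i : Fin M) (B : Finset (Fin M)) :
    (((Finset.univ : Finset (Equiv.Perm (Fin M))).filter (fun ρ => ρ i ∉ B)).card : ℝ)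
      = Fintype.card (Equiv.Perm (Fin M)) * (1 - B.card / M) := by
  have h := Finset.card_filter_add_card_filter_not (s := (Finset.univ : Finset (Equiv.Perm (Fin M))))
    (fun ρ => ρ i ∈ B)
  rw [Finset.card_univ] at h
  have h' : ((((Finset.univ : Finset (Equiv.Perm (Fin M))).filter (fun ρ => ρ i ∈ B)).card : ℝ)
      + ((Finset.univ : Finset (Equiv.Perm (Fin M))).filter (fun ρ => ρ i ∉ B)).card)
      = Fintype.card (Equiv.Perm (Fin M)) := by exact_mod_cast h
  rw [perm_in_one hM] at h'
  linarith

lemma perm_out_two {M : ℕ} (hM : 2 ≤ M) (i j : Fin M) (hij : i ≠ j) (B B' : Finset (Fin M)) :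
    (((Finset.univ : Finset (Equiv.Perm (Fin M))).filter (fun ρ => ρ i ∉ B ∧ ρ j ∉ B')).card : ℝ)
      ≤ Fintype.card (Equiv.Perm (Fin M)) *
        ((1 - B.card / M) * (1 - B'.card / M) + B.card * B'.card / (M ^ 2 * (M - 1))) := by
  have hM2 : (2 : ℝ) ≤ M := by exact_mod_cast hM
  have e1 : ∀ ρ : Equiv.Perm (Fin M), (if ρ i ∉ B ∧ ρ j ∉ B' then (1 : ℝ) else 0)
      = 1 - (if ρ i ∈ B then 1 else 0) - (if ρ j ∈ B' then 1 else 0)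
        + (if ρ i ∈ B ∧ ρ j ∈ B' then 1 else 0) := by
    intro ρ
    by_cases h1 : ρ i ∈ B <;> by_cases h2 : ρ j ∈ B' <;> simp [h1, h2]
  have h2 := perm_in_two hM i j hij B B'
  rw [Finset.natCast_card_filter, Finset.sum_congr rfl (fun ρ _ => e1 ρ), Finset.sum_add_distrib,
    Finset.sum_sub_distrib, Finset.sum_sub_distrib, ← Finset.natCast_card_filter,
    ← Finset.natCast_card_filter, ← Finset.natCast_card_filter, perm_in_one hM, perm_in_one hM]
  simp only [Finset.sum_const, Finset.card_univ, nsmul_eq_mul, mul_one]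
  refine le_trans (add_le_add_right h2 _) (le_of_eq ?_)
  have : (M : ℝ) - 1 ≠ 0 := by linarith
  have : (M : ℝ) ≠ 0 := by linarith
  field_simp
  ring

lemma prod_add_le {ι : Type*} {z : ι → ℝ} (S : Finset ι) (x y : ι → ℝ) (hx : ∀ i ∈ S, 0 ≤ x i)
    (hx1 : ∀ i ∈ S, x i ≤ 1) (hy : ∀ i ∈ S, 0 ≤ y i) (hxy : ∀ i ∈ S, z i ≤ x i + y i)
    (hz0 : ∀ i ∈ S, 0 ≤ z i) (hz1 : ∀ i ∈ S, z i ≤ 1) :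
    ∏ i ∈ S, z i ≤ ∏ i ∈ S, x i + ∑ i ∈ S, y i := by
  induction S using Finset.induction_on with
  | empty => simp
  | insert a S ha ih =>
    rw [Finset.prod_insert ha, Finset.prod_insert ha, Finset.sum_insert ha]
    have ih' := ih (fun i hi => hx i (Finset.mem_insert_of_mem hi))
      (fun i hi => hx1 i (Finset.mem_insert_of_mem hi))
      (fun i hi => hy i (Finset.mem_insert_of_mem hi))
      (fun i hi => hxy i (Finset.mem_insert_of_mem hi))
      (fun i hi => hz0 i (Finset.mem_insert_of_mem hi))
      (fun i hi => hz1 i (Finset.mem_insert_of_mem hi))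
    have hm := Finset.mem_insert_self a S
    have p1 : ∏ i ∈ S, z i ≤ 1 := Finset.prod_le_one
      (fun i hi => hz0 i (Finset.mem_insert_of_mem hi))
      (fun i hi => hz1 i (Finset.mem_insert_of_mem hi))
    have p0 : 0 ≤ ∏ i ∈ S, z i := Finset.prod_nonneg
      (fun i hi => hz0 i (Finset.mem_insert_of_mem hi))
    have s0 : 0 ≤ ∑ i ∈ S, y i := Finset.sum_nonneg
      (fun i hi => hy i (Finset.mem_insert_of_mem hi))
    have := hx a hm
    have := hx1 a hm
    have := hy a hm
    have := hxy a hm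
    calc z a * ∏ i ∈ S, z i ≤ (x a + y a) * ∏ i ∈ S, z i := by gcongr
      _ = x a * ∏ i ∈ S, z i + y a * ∏ i ∈ S, z i := by ring
      _ ≤ x a * (∏ i ∈ S, x i + ∑ i ∈ S, y i) + y a * 1 := by gcongr
      _ ≤ x a * ∏ i ∈ S, x i + (y a + ∑ i ∈ S, y i) := by nlinarith

set_option maxHeartbeats 400000 in
lemma cheb {M s : ℕ} (D : ℝ) (hM : 2 ≤ M) (B : Fin M → Fin s → Finset (Fin M))
    (hB : ∀ i, ∑ c, ((B i c).card : ℝ) ≤ D) (t : ℝ) (ht : 0 ≤ t) :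
    (((Finset.univ : Finset (Fin s → Equiv.Perm (Fin M))).filter (fun τ =>
      ∑ i, ∏ c, (1 - ((B i c).card : ℝ) / M) + t
        ≤ ((Finset.univ.filter (fun i => ∀ c, τ c i ∉ B i c)).card : ℝ))).card : ℝ) * t ^ 2
      ≤ Fintype.card (Fin s → Equiv.Perm (Fin M)) * (M + M ^ 2 * (D / (M * (M - 1)))) := by
  have hM2 : (2 : ℝ) ≤ M := by exact_mod_cast hM
  set W : ℝ := (Fintype.card (Fin s → Equiv.Perm (Fin M)) : ℝ) with hW
  have hW' : W = ∏ c : Fin s, (Fintype.card (Equiv.Perm (Fin M)) : ℝ) := by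
    simp [hW]
  have hW0 : 0 ≤ W := by positivity
  set F : ℝ := (Fintype.card (Equiv.Perm (Fin M)) : ℝ) with hF
  have hF0 : 0 < F := by simp only [hF]; exact_mod_cast Fintype.card_pos
  set p : Fin M → ℝ := fun i => ∏ c, (1 - ((B i c).card : ℝ) / M) with hp
  have hb1 : ∀ i c, ((B i c).card : ℝ) ≤ M := fun i c => by
    have := Finset.card_le_univ (B i c)
    simp only [Fintype.card_fin] at this
    exact_mod_cast this
  have hq0 : ∀ i c, 0 ≤ 1 - ((B i c).card : ℝ) / M := fun i c => by
    have : ((B i c).card : ℝ) / M ≤ 1 := (div_le_one (by linarith)).mpr (hb1 i c)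
    linarith
  have hq1 : ∀ i c, 1 - ((B i c).card : ℝ) / M ≤ 1 := fun i c => by
    have : 0 ≤ ((B i c).card : ℝ) / M := by positivity
    linarith
  have hp0 : ∀ i, 0 ≤ p i := fun i => Finset.prod_nonneg (fun c _ => hq0 i c)
  set δ : ℝ := D / (M * (M - 1)) with hδ
  have hD : 0 ≤ D := by
    exact le_trans (Finset.sum_nonneg (fun c _ => Nat.cast_nonneg _)) (hB ⟨0, by omega⟩)
  have hδ0 : 0 ≤ δ := by
    have : (0 : ℝ) ≤ M - 1 := by linarith
    exact div_nonneg hD (mul_nonneg (by linarith) this)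
  let e : Fin M → (Fin s → Equiv.Perm (Fin M)) → ℝ := fun i τ => if ∀ c, τ c i ∉ B i c then 1 else 0
  have he : ∀ i, ∑ τ, e i τ = W * p i := by
    intro i
    simp only [e]
    rw [← Finset.natCast_card_filter]
    have : (Finset.univ : Finset (Fin s → Equiv.Perm (Fin M))).filter (fun τ => ∀ c, τ c i ∉ B i c)
        = Fintype.piFinset (fun c => Finset.univ.filter (fun ρ => ρ i ∉ B i c)) := by
      ext τ; simp [Fintype.mem_piFinset]
    rw [this, Fintype.card_piFinset]
    push_cast
    rw [Finset.prod_congr rfl (fun c _ => perm_out_one hM i (B i c)), Finset.prod_mul_distrib, ← hW']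
  have hee : ∀ i j, ∑ τ, e i τ * e j τ ≤ W * (p i * p j + ((if i = j then 1 else 0) + δ)) := by
    intro i j
    by_cases hij : i = j
    · have : ∑ τ, e i τ * e j τ ≤ ∑ τ : (Fin s → Equiv.Perm (Fin M)), (1 : ℝ) := by
        apply Finset.sum_le_sum
        intro τ _
        simp only [e]
        split_ifs <;> norm_num
      simp only [Finset.sum_const, Finset.card_univ, nsmul_eq_mul, mul_one] at this
      rw [if_pos hij]
      refine this.trans ?_
      have := mul_nonneg (hp0 i) (hp0 j)
      nlinarith
    · rw [if_neg hij]
      have h1 : ∀ τ, e i τ * e j τ = if (∀ c, τ c i ∉ B i c ∧ τ c j ∉ B j c) then 1 else 0 := by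
        intro τ
        simp only [e, forall_and]
        split_ifs <;> simp_all
      rw [Finset.sum_congr rfl (fun τ _ => h1 τ), ← Finset.natCast_card_filter]
      have : (Finset.univ : Finset (Fin s → Equiv.Perm (Fin M))).filter (fun τ => ∀ c, τ c i ∉ B i c ∧ τ c j ∉ B j c)
          = Fintype.piFinset
            (fun c => Finset.univ.filter (fun ρ => ρ i ∉ B i c ∧ ρ j ∉ B j c)) := by
        ext τ; simp [Fintype.mem_piFinset]
      rw [this, Fintype.card_piFinset]
      push_cast
      set z : Fin s → ℝ := fun c => ((Finset.univ.filter
        (fun ρ : Equiv.Perm (Fin M) => ρ i ∉ B i c ∧ ρ j ∉ B j c)).card : ℝ) / F with hz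
      have hz' : ∀ c, ((Finset.univ.filter
        (fun ρ : Equiv.Perm (Fin M) => ρ i ∉ B i c ∧ ρ j ∉ B j c)).card : ℝ) = F * z c := by
        intro c
        simp only [hz]
        field_simp
      rw [Finset.prod_congr rfl (fun c _ => hz' c), Finset.prod_mul_distrib, ← hW']
      refine mul_le_mul_of_nonneg_left ?_ hW0
      have hm1 : (0 : ℝ) < M - 1 := by linarith
      have hm0 : (0 : ℝ) < M := by linarith
      have hpos1 : (0 : ℝ) < M ^ 2 * (M - 1) := mul_pos (pow_pos hm0 2) hm1
      have hpos2 : (0 : ℝ) < M * (M - 1) := mul_pos hm0 hm1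
      have := prod_add_le (z := z) Finset.univ
        (fun c => (1 - ((B i c).card : ℝ) / M) * (1 - ((B j c).card : ℝ) / M))
        (fun c => ((B i c).card : ℝ) * (B j c).card / (M ^ 2 * (M - 1)))
        (fun c _ => mul_nonneg (hq0 i c) (hq0 j c))
        (fun c _ => mul_le_one₀ (hq1 i c) (hq0 j c) (hq1 j c))
        (fun c _ => div_nonneg (mul_nonneg (Nat.cast_nonneg _) (Nat.cast_nonneg _)) hpos1.le)
        (fun c _ => by
          simp only [hz]
          rw [div_le_iff₀ hF0, mul_comm]
          exact perm_out_two hM i j hij (B i c) (B j c))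
        (fun c _ => div_nonneg (Nat.cast_nonneg _) hF0.le)
        (fun c _ => by
          simp only [hz]
          rw [div_le_one hF0, hF]
          exact_mod_cast Finset.card_le_univ _)
      rw [Finset.prod_mul_distrib] at this
      refine this.trans ?_
      rw [zero_add]
      refine add_le_add_right ?_ _
      rw [← Finset.sum_div, hδ, div_le_div_iff₀ hpos1 hpos2]
      have h3 : ∑ c, ((B i c).card : ℝ) * (B j c).card ≤ M * D := by
        calc _ ≤ ∑ c, (M : ℝ) * (B j c).card :=
              Finset.sum_le_sum (fun c _ => mul_le_mul_of_nonneg_right (hb1 i c) (Nat.cast_nonneg _))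
          _ = M * ∑ c, ((B j c).card : ℝ) := by rw [Finset.mul_sum]
          _ ≤ _ := by gcongr; exact hB j
      calc _ ≤ (M * D) * (M * (M - 1)) := by gcongr
        _ = _ := by ring
  have hvar : ∑ τ, (∑ i, e i τ - ∑ i, p i) ^ 2 ≤ W * (M + M ^ 2 * δ) := by
    have h1 : ∀ τ, (∑ i, e i τ - ∑ i, p i) ^ 2 = ∑ i, ∑ j, (e i τ - p i) * (e j τ - p j) := by
      intro τ
      rw [← Finset.sum_sub_distrib, sq, Finset.sum_mul_sum]
    rw [Finset.sum_congr rfl (fun τ _ => h1 τ), Finset.sum_comm]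
    have h2 : ∀ i j, ∑ τ, (e i τ - p i) * (e j τ - p j) ≤ W * ((if i = j then 1 else 0) + δ) := by
      intro i j
      have h3 : ∀ τ, (e i τ - p i) * (e j τ - p j)
          = e i τ * e j τ - e i τ * p j - p i * e j τ + p i * p j := fun τ => by ring
      rw [Finset.sum_congr rfl (fun τ _ => h3 τ), Finset.sum_add_distrib, Finset.sum_sub_distrib,
        Finset.sum_sub_distrib, ← Finset.sum_mul, ← Finset.mul_sum, he, he, Finset.sum_const,
        Finset.card_univ, nsmul_eq_mul]
      have := hee i j
      rw [← hW]
      nlinarith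
    calc _ ≤ ∑ i : Fin M, ∑ j : Fin M, W * ((if i = j then 1 else 0) + δ) := by
          apply Finset.sum_le_sum
          intro i _
          rw [Finset.sum_comm]
          exact Finset.sum_le_sum (fun j _ => h2 i j)
      _ = _ := by
          simp only [← Finset.mul_sum, Finset.sum_add_distrib, Finset.sum_ite_eq, Finset.mem_univ,
            if_true, Finset.sum_const, Finset.card_univ, Fintype.card_fin, nsmul_eq_mul]
          ring
  refine le_trans ?_ hvar
  rw [← nsmul_eq_mul, ← Finset.sum_const]
  refine le_trans (Finset.sum_le_sum ?_)
    (Finset.sum_le_sum_of_subset_of_nonneg (Finset.filter_subset _ _) (fun τ _ _ => sq_nonneg _))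
  intro τ hτ
  rw [Finset.mem_filter] at hτ
  have h := hτ.2
  rw [Finset.natCast_card_filter] at h
  change ∑ i, p i + t ≤ ∑ i, e i τ at h
  apply pow_le_pow_left₀ ht
  linarith

def boxPt {n M s k : ℕ} (h : s * M ≤ n) (i : Fin M) (c : Fin k → Fin s) : Fin k → Fin n :=
  fun j => bpos h (i, c j)

lemma boxPt_inj {n M s k : ℕ} (h : s * M ≤ n) (i : Fin M) :
    Function.Injective (boxPt (k := k) h i) := by
  intro c c' hc
  funext j
  have := (bpos h).injective (congrFun hc j)
  exact (Prod.ext_iff.mp this).2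

noncomputable def coll {n M s k : ℕ} (h : s * M ≤ n) (A : (Fin (k + 1) → Fin n) → Bool)
    (i : Fin M) : ℕ :=
  ((Finset.univ : Finset ((Fin k → Fin s) × (Fin k → Fin s))).filter (fun p => p.1 ≠ p.2 ∧
    ∃ v, A (Fin.cons v (boxPt h i p.1)) = true ∧ A (Fin.cons v (boxPt h i p.2)) = true)).card

def NEblk {n M s k : ℕ} (h : s * M ≤ n) (A : (Fin (k + 1) → Fin n) → Bool) (i : Fin M) : Prop :=
  ∃ (c0 : Fin s) (c : Fin k → Fin s), A (Fin.cons (bpos h (i, c0)) (boxPt h i c)) = true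

lemma coll_sum {n M s k : ℕ} (h : s * M ≤ n) :
    (∑ A ∈ HDPerms n k, ∑ i, coll h A i) * (n - 1) ≤ (HDPerms n k).card * (M * (s ^ k) ^ 2) := by
  rw [Finset.sum_comm, Finset.sum_mul]
  have key : ∀ i : Fin M, (∑ A ∈ HDPerms n k, coll h A i) * (n - 1)
      ≤ (HDPerms n k).card * (s ^ k) ^ 2 := by
    intro i
    simp only [coll, Finset.card_filter]
    rw [Finset.sum_comm, Finset.sum_mul]
    have : (HDPerms n k).card * (s ^ k) ^ 2
        = ∑ p : (Fin k → Fin s) × (Fin k → Fin s), (HDPerms n k).card := by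
      simp [sq, mul_comm]
    rw [this]
    apply Finset.sum_le_sum
    intro p _
    rw [← Finset.card_filter]
    by_cases hp : p.1 = p.2
    · simp [hp]
    · have := collision_count (boxPt h i p.1) (boxPt h i p.2) (fun e => hp (boxPt_inj h i e))
      simpa [hp] using this
  calc _ ≤ ∑ i : Fin M, (HDPerms n k).card * (s ^ k) ^ 2 := Finset.sum_le_sum (fun i _ => key i)
    _ = _ := by simp; ring

lemma bddAbove_mono (n k : ℕ) (A : (Fin (k + 1) → Fin n) → Bool) :
    BddAbove {m : ℕ | ∃ α : Fin m → (Fin (k + 1) → Fin n), IsMonoSub n k m A α} := by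
  refine ⟨n, ?_⟩
  rintro m ⟨α, _, hα⟩
  have hinj : Function.Injective (fun i => α i 0) := by
    rcases hα 0 with h | h
    · exact h.injective
    · exact h.injective
  simpa using Fintype.card_le_of_injective _ hinj

lemma HLen_ge {n M s k : ℕ} (h : s * M ≤ n) (A : (Fin (k + 1) → Fin n) → Bool) :
    (Finset.univ.filter (fun i => NEblk h A i)).card ≤ HLen n k A := by
  apply le_csSup (bddAbove_mono n k A)
  set S := Finset.univ.filter (fun i => NEblk h A i) with hS
  let o := S.orderEmbOfFin rfl
  have ho : ∀ r, NEblk h A (o r) := fun r => by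
    have := S.orderEmbOfFin_mem rfl r
    exact (Finset.mem_filter.mp this).2
  choose c0 c hc using ho
  refine ⟨fun r => Fin.cons (bpos h (o r, c0 r)) (boxPt h (o r) (c r)), hc, fun j => Or.inl ?_⟩
  intro r r' hr
  refine Fin.cases ?_ (fun j => ?_) j
  · simp only [Fin.cons_zero]
    exact bpos_lt h _ _ (o.strictMono hr)
  · simp only [Fin.cons_succ, boxPt]
    exact bpos_lt h _ _ (o.strictMono hr)

noncomputable def colPerm {n M s : ℕ} (h : s * M ≤ n) (τ : Fin s → Equiv.Perm (Fin M)) : Equiv.Perm (Fin n) :=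
  Equiv.Perm.viaEmbedding (Equiv.prodCongrLeft τ) (bpos h)

lemma colPerm_apply {n M s : ℕ} (h : s * M ≤ n) (τ : Fin s → Equiv.Perm (Fin M))
    (i : Fin M) (c : Fin s) : colPerm h τ (bpos h (i, c)) = bpos h (τ c i, c) := by
  rw [colPerm, Equiv.Perm.viaEmbedding_apply, Equiv.prodCongrLeft_apply]

noncomputable def colTuple {n M s : ℕ} (k : ℕ) (h : s * M ≤ n) (τ : Fin s → Equiv.Perm (Fin M)) :
    Fin (k + 1) → Equiv.Perm (Fin n) := Fin.cons (colPerm h τ) (fun _ => Equiv.refl _)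

lemma hdAct_colTuple {n M s k : ℕ} (h : s * M ≤ n) (τ : Fin s → Equiv.Perm (Fin M))
    (A : (Fin (k + 1) → Fin n) → Bool) (v : Fin n) (x : Fin k → Fin n) :
    hdAct (colTuple k h τ) A (Fin.cons v x) = A (Fin.cons (colPerm h τ v) x) := by
  unfold hdAct
  congr 1
  funext j
  refine Fin.cases ?_ (fun j => ?_) j <;> simp [colTuple]

lemma exists_sym {n k : ℕ} (h0 : 0 < n) {A : (Fin (k + 1) → Fin n) → Bool} (hA : IsHDPerm n k A) :
    ∃ f : (Fin k → Fin n) → Fin n, ∀ x v, A (Fin.cons v x) = true ↔ v = f x := by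
  have : ∀ x : Fin k → Fin n, ∃ w, ∀ v, A (Fin.cons v x) = true ↔ v = w := by
    intro x
    obtain ⟨w, hw, hu⟩ := hA 0 (Fin.cons ⟨0, h0⟩ x)
    simp only [Fin.update_cons_zero] at hw hu
    exact ⟨w, fun v => ⟨hu v, fun e => e ▸ hw⟩⟩
  choose f hf using this
  exact ⟨f, hf⟩

lemma exp_neg_two_le : Real.exp (-2) ≤ 0.14 := by
  have h := Real.exp_one_gt_d9
  have : Real.exp 2 = Real.exp 1 * Real.exp 1 := by rw [← Real.exp_add]; norm_num
  rw [Real.exp_neg, this]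
  apply inv_le_of_inv_le₀ (by norm_num)
  norm_num
  nlinarith

lemma stage2 {n M s k : ℕ} (hn : 0 < n) (h : s * M ≤ n) (h' : n ≤ s * M + M) (hM : 2 ≤ M)
    (hs : (3.5 : ℝ) * M ≤ (s : ℝ) ^ k) {A : (Fin (k + 1) → Fin n) → Bool} (hA : IsHDPerm n k A)
    (hcoll : ((∑ i, coll h A i : ℕ) : ℝ) ≤ (M : ℝ) ^ 2 / 40) :
    (((Finset.univ : Finset (Fin s → Equiv.Perm (Fin M))).filter (fun τ =>
      ((Finset.univ.filter (fun i => NEblk h (hdAct (colTuple k h τ) A) i)).card : ℝ)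
        ≤ 0.75 * M)).card : ℝ) * ((M : ℝ) / 20) ^ 2
      ≤ Fintype.card (Fin s → Equiv.Perm (Fin M)) *
        (M + M ^ 2 * ((s : ℝ) ^ k / (M * (M - 1)))) := by
  have hM2 : (2 : ℝ) ≤ M := by exact_mod_cast hM
  have hM0 : (0 : ℝ) < M := by linarith
  obtain ⟨f, hf⟩ := exists_sym hn hA
  let S : Fin M → Finset (Fin n) := fun i => Finset.univ.image (fun c => f (boxPt h i c))
  let B : Fin M → Fin s → Finset (Fin M) := fun i c =>
    Finset.univ.filter (fun i' => bpos h (i', c) ∈ S i)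
  have hScoll : ∀ i, s ^ k ≤ (S i).card + coll h A i := by
    intro i
    have := card_le_image_add_coll (fun c : Fin k → Fin s => f (boxPt h i c))
    simp only [Fintype.card_fun, Fintype.card_fin] at this
    refine this.trans (le_of_eq ?_)
    unfold coll
    congr 2
    · ext v; simp [S]
    · ext p; simp [hf]
  have hSup : ∀ i, (S i).card ≤ s ^ k := by
    intro i
    refine Finset.card_image_le.trans ?_
    simp
  have hBsum : ∀ i, ∑ c, (B i c).card
      = (Finset.univ.filter (fun q : Fin M × Fin s => bpos h q ∈ S i)).card := by
    intro i
    simp only [B, Finset.card_filter]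
    rw [Fintype.sum_prod_type, Finset.sum_comm]
  have hBup : ∀ i, ∑ c, (B i c).card ≤ s ^ k := by
    intro i
    rw [hBsum]
    refine le_trans ?_ (hSup i)
    apply Finset.card_le_card_of_injOn (bpos h)
    · intro q hq
      simpa using hq
    · exact (bpos h).injective.injOn
  have hBlow : ∀ i, (S i).card ≤ ∑ c, (B i c).card + M := by
    intro i
    rw [hBsum]
    have hsub : S i ⊆ (Finset.univ.filter (fun q : Fin M × Fin s => bpos h q ∈ S i)).map (bpos h)
        ∪ (Finset.univ.map (bpos h))ᶜ := by
      intro v hv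
      by_cases hr : v ∈ Finset.univ.map (bpos h)
      · apply Finset.mem_union_left
        rw [Finset.mem_map] at hr ⊢
        obtain ⟨q, _, rfl⟩ := hr
        exact ⟨q, by simpa using hv, rfl⟩
      · exact Finset.mem_union_right _ (Finset.mem_compl.mpr hr)
    refine (Finset.card_le_card hsub).trans ((Finset.card_union_le _ _).trans ?_)
    rw [Finset.card_map, Finset.card_compl, Finset.card_map]
    simp only [Finset.card_univ, Fintype.card_prod, Fintype.card_fin]
    have : M * s = s * M := mul_comm _ _
    omega
  have hch := cheb ((s : ℝ) ^ k) hM B (fun i => by exact_mod_cast hBup i) ((M : ℝ) / 20)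
    (by linarith)
  refine le_trans (mul_le_mul_of_nonneg_right ?_ (sq_nonneg _)) hch
  rw [Nat.cast_le]
  apply Finset.card_le_card
  intro τ hτ
  simp only [Finset.mem_filter, Finset.mem_univ, true_and] at hτ ⊢
  have hp : ∀ i, ∏ c, (1 - ((B i c).card : ℝ) / M) ≤ 0.14 + 2 / M * (coll h A i : ℝ) := by
    intro i
    have hle : ∏ c, (1 - ((B i c).card : ℝ) / M) ≤ Real.exp (-((∑ c, (B i c).card : ℕ) : ℝ) / M) := by
      have e : (-((∑ c, (B i c).card : ℕ) : ℝ) / M) = ∑ c, -(((B i c).card : ℝ) / M) := by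
        push_cast
        rw [Finset.sum_neg_distrib, neg_div, Finset.sum_div]
      rw [e, Real.exp_sum]
      apply Finset.prod_le_prod
      · intro c _
        have : ((B i c).card : ℝ) ≤ M := by
          have := Finset.card_le_univ (B i c)
          simp only [Fintype.card_fin] at this
          exact_mod_cast this
        have := (div_le_one hM0).mpr this
        linarith
      · intro c _
        exact Real.one_sub_le_exp_neg _
    have a1 : ((s : ℝ) ^ k) ≤ ((∑ c, (B i c).card : ℕ) : ℝ) + M + coll h A i := by
      have := hScoll i
      have := hBlow i
      have : s ^ k ≤ ∑ c, (B i c).card + M + coll h A i := by omega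
      exact_mod_cast this
    have hc0 : (0 : ℝ) ≤ coll h A i := Nat.cast_nonneg _
    by_cases hc : (coll h A i : ℝ) ≤ M / 2
    · have : Real.exp (-((∑ c, (B i c).card : ℕ) : ℝ) / M) ≤ Real.exp (-2) := by
        apply Real.exp_le_exp.mpr
        rw [div_le_iff₀ hM0]
        linarith
      have := exp_neg_two_le
      have : 0 ≤ 2 / M * (coll h A i : ℝ) := mul_nonneg (div_nonneg (by norm_num) hM0.le) hc0
      linarith
    · have h1 : Real.exp (-((∑ c, (B i c).card : ℕ) : ℝ) / M) ≤ 1 := by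
        apply Real.exp_le_one_iff.mpr
        rw [neg_div]
        exact neg_nonpos.mpr (div_nonneg (Nat.cast_nonneg _) hM0.le)
      have h2 : 1 ≤ 2 / M * (coll h A i : ℝ) := by
        rw [div_mul_eq_mul_div, le_div_iff₀ hM0]
        push Not at hc
        linarith
      linarith
  have hps : ∑ i, ∏ c, (1 - ((B i c).card : ℝ) / M) ≤ 0.14 * M + 0.05 * M := by
    refine (Finset.sum_le_sum (fun i _ => hp i)).trans ?_
    rw [Finset.sum_add_distrib, ← Finset.mul_sum]
    simp only [Finset.sum_const, Finset.card_univ, Fintype.card_fin, nsmul_eq_mul]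
    push_cast at hcoll
    have : 2 / (M : ℝ) * ∑ i, (coll h A i : ℝ) ≤ 2 / M * ((M : ℝ) ^ 2 / 40) :=
      mul_le_mul_of_nonneg_left hcoll (div_nonneg (by norm_num) hM0.le)
    have e : 2 / (M : ℝ) * ((M : ℝ) ^ 2 / 40) = 0.05 * M := by
      field_simp; norm_num
    linarith
  have hcomp := Finset.card_filter_add_card_filter_not (s := (Finset.univ : Finset (Fin M)))
    (fun i => ∀ c, τ c i ∉ B i c)
  rw [Finset.card_univ, Fintype.card_fin] at hcomp
  have hsub : (Finset.univ.filter (fun i => ¬ ∀ c, τ c i ∉ B i c)).card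
      ≤ (Finset.univ.filter (fun i => NEblk h (hdAct (colTuple k h τ) A) i)).card := by
    apply Finset.card_le_card
    intro i hi
    simp only [Finset.mem_filter, Finset.mem_univ, true_and] at hi ⊢
    push Not at hi
    obtain ⟨c0, hc0⟩ := hi
    simp only [B, S, Finset.mem_filter, Finset.mem_univ, true_and, Finset.mem_image] at hc0
    obtain ⟨c, hc⟩ := hc0
    refine ⟨c0, c, ?_⟩
    rw [hdAct_colTuple, colPerm_apply, hf, hc]
  have hcomp' : (((Finset.univ.filter (fun i => ∀ c, τ c i ∉ B i c)).card : ℝ)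
      + ((Finset.univ.filter (fun i => ¬ ∀ c, τ c i ∉ B i c)).card : ℝ)) = M := by
    exact_mod_cast hcomp
  have hsub' : ((Finset.univ.filter (fun i => ¬ ∀ c, τ c i ∉ B i c)).card : ℝ)
      ≤ ((Finset.univ.filter (fun i => NEblk h (hdAct (colTuple k h τ) A) i)).card : ℝ) := by
    exact_mod_cast hsub
  linarith

lemma lower_count {n M s k : ℕ} (hn : 2 ≤ n) (h : s * M ≤ n) (h' : n ≤ s * M + M) (hM : 2 ≤ M)
    (hs : (3.5 : ℝ) * M ≤ (s : ℝ) ^ k) :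
    (((HDPerms n k).filter (fun A => (HLen n k A : ℝ) ≤ 0.75 * M)).card : ℝ)
      ≤ (HDPerms n k).card * ((400 / (M : ℝ) ^ 2) * (M + M ^ 2 * ((s : ℝ) ^ k / (M * (M - 1))))
        + 40 * ((s : ℝ) ^ k) ^ 2 / (M * (n - 1))) := by
  have hM2 : (2 : ℝ) ≤ M := by exact_mod_cast hM
  have hM0 : (0 : ℝ) < M := by linarith
  have hn2 : (2 : ℝ) ≤ n := by exact_mod_cast hn
  let Q : ((Fin (k + 1) → Fin n) → Bool) → Prop := fun A =>
    ((Finset.univ.filter (fun i => NEblk h A i)).card : ℝ) ≤ 0.75 * M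
  let R : ((Fin (k + 1) → Fin n) → Bool) → Prop := fun A =>
    ((∑ i, coll h A i : ℕ) : ℝ) ≤ (M : ℝ) ^ 2 / 40
  set W : ℝ := (Fintype.card (Fin s → Equiv.Perm (Fin M)) : ℝ) with hW
  have hW0 : 0 < W := by simp only [hW]; exact_mod_cast Fintype.card_pos
  set ε : ℝ := (400 / (M : ℝ) ^ 2) * (M + M ^ 2 * ((s : ℝ) ^ k / (M * (M - 1)))) with hε
  have hε0 : 0 ≤ ε := by
    have : (0 : ℝ) ≤ M - 1 := by linarith
    have : (0 : ℝ) ≤ (s : ℝ) ^ k / (M * (M - 1)) :=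
      div_nonneg (pow_nonneg (Nat.cast_nonneg _) _) (mul_nonneg hM0.le this)
    rw [hε]
    exact mul_nonneg (div_nonneg (by norm_num) (sq_nonneg _))
      (add_nonneg hM0.le (mul_nonneg (sq_nonneg _) this))
  set G : ℝ := ((HDPerms n k).card : ℝ) with hG
  -- few A violate R
  have hR : (((HDPerms n k).filter (fun A => ¬ R A)).card : ℝ)
      ≤ G * (40 * ((s : ℝ) ^ k) ^ 2 / (M * (n - 1))) := by
    have h1 : (((HDPerms n k).filter (fun A => ¬ R A)).card : ℝ) * ((M : ℝ) ^ 2 / 40)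
        ≤ ((∑ A ∈ HDPerms n k, ∑ i, coll h A i : ℕ) : ℝ) := by
      rw [← nsmul_eq_mul, ← Finset.sum_const, Nat.cast_sum]
      refine le_trans (Finset.sum_le_sum ?_) (Finset.sum_le_sum_of_subset_of_nonneg
        (Finset.filter_subset (fun A => ¬ R A) _) (fun A _ _ => Nat.cast_nonneg _))
      intro A hA
      rw [Finset.mem_filter] at hA
      exact (not_le.mp hA.2).le
    have h2 : ((∑ A ∈ HDPerms n k, ∑ i, coll h A i : ℕ) : ℝ) * (n - 1)
        ≤ G * (M * ((s : ℝ) ^ k) ^ 2) := by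
      have := coll_sum (k := k) h
      have h3 : (((∑ A ∈ HDPerms n k, ∑ i, coll h A i) * (n - 1) : ℕ) : ℝ)
        ≤ (((HDPerms n k).card * (M * (s ^ k) ^ 2) : ℕ) : ℝ) := by exact_mod_cast this
      rw [Nat.cast_mul, Nat.cast_sub (by omega : 1 ≤ n)] at h3
      push_cast at h3 ⊢
      exact h3
    have hn1 : (0 : ℝ) < n - 1 := by linarith
    have h4 := (mul_le_mul_of_nonneg_right h1 hn1.le).trans h2
    rw [← mul_div_assoc, le_div_iff₀ (mul_pos hM0 hn1)]
    have h5 : ((((HDPerms n k).filter (fun A => ¬ R A)).card : ℝ) * (M * (n - 1))) * M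
        ≤ (G * (40 * ((s : ℝ) ^ k) ^ 2)) * M := by linarith
    exact le_of_mul_le_mul_right h5 hM0
  -- main averaging
  have hmain : W * (((HDPerms n k).filter Q).card : ℝ)
      ≤ W * (G * (ε + 40 * ((s : ℝ) ^ k) ^ 2 / (M * (n - 1)))) := by
    have e1 : W * (((HDPerms n k).filter Q).card : ℝ)
        = ∑ A ∈ HDPerms n k, (((Finset.univ : Finset (Fin s → Equiv.Perm (Fin M))).filter
          (fun τ => Q (hdAct (colTuple k h τ) A))).card : ℝ) := by
      have : ∀ τ : Fin s → Equiv.Perm (Fin M), (((HDPerms n k).filter Q).card : ℝ)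
          = ∑ A ∈ HDPerms n k, if Q (hdAct (colTuple k h τ) A) then (1 : ℝ) else 0 := by
        intro τ
        rw [← Finset.natCast_card_filter, card_filter_hdAct]
      simp only [Finset.natCast_card_filter (fun τ => Q (hdAct (colTuple k h τ) _))]
      rw [Finset.sum_comm, ← Finset.sum_congr rfl (fun τ _ => this τ)]
      simp [hW]
    rw [e1]
    have e2 : ∀ A ∈ HDPerms n k, (((Finset.univ : Finset (Fin s → Equiv.Perm (Fin M))).filter
          (fun τ => Q (hdAct (colTuple k h τ) A))).card : ℝ)
          ≤ W * ε + W * (if ¬ R A then 1 else 0) := by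
      intro A hA
      by_cases hRA : R A
      · have := stage2 (by omega) h h' hM hs (mem_HDPerms.mp hA) hRA
        rw [if_neg (not_not.mpr hRA), mul_zero, add_zero, hε]
        rw [← hW] at this
        change (((Finset.univ : Finset (Fin s → Equiv.Perm (Fin M))).filter
          (fun τ => Q (hdAct (colTuple k h τ) A))).card : ℝ) * _ ≤ _ at this
        have hp : (0 : ℝ) < ((M : ℝ) / 20) ^ 2 := by positivity
        rw [← le_div_iff₀ hp] at this
        refine this.trans (le_of_eq ?_)
        field_simp
        norm_num
      · rw [if_pos hRA, mul_one]
        have h1 : (((Finset.univ : Finset (Fin s → Equiv.Perm (Fin M))).filter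
          (fun τ => Q (hdAct (colTuple k h τ) A))).card : ℝ) ≤ W := by
          rw [hW]
          exact_mod_cast Finset.card_le_univ _
        have := mul_nonneg hW0.le hε0
        linarith
    refine (Finset.sum_le_sum e2).trans ?_
    rw [Finset.sum_add_distrib, Finset.sum_const, nsmul_eq_mul, ← Finset.mul_sum,
      ← Finset.natCast_card_filter, ← hG]
    have := mul_le_mul_of_nonneg_left hR hW0.le
    linarith
  have hfin := le_of_mul_le_mul_left hmain hW0
  refine le_trans ?_ hfin
  rw [Nat.cast_le]
  apply Finset.card_le_card
  intro A hA
  rw [Finset.mem_filter] at hA ⊢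
  refine ⟨hA.1, le_trans ?_ hA.2⟩
  exact_mod_cast HLen_ge h A

lemma upper_count' (n k m : ℕ) :
    (((HDPerms n k).filter (fun A => m ≤ HLen n k A)).card : ℝ) * (m.factorial : ℝ) ^ (k + 1)
      ≤ (HDPerms n k).card * (2 ^ (k + 1) * ((n : ℝ) ^ k) ^ m) := by
  have h := upper_count n k m
  have hsub : ((HDPerms n k).filter (fun A => m ≤ HLen n k A)).card ≤
      ((HDPerms n k).filter (fun A => ∃ α, IsMonoSub n k m A α)).card := by
    apply Finset.card_le_card
    intro A hA
    rw [Finset.mem_filter] at hA ⊢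
    refine ⟨hA.1, ?_⟩
    have hne : {m : ℕ | ∃ α : Fin m → (Fin (k + 1) → Fin n), IsMonoSub n k m A α}.Nonempty :=
      ⟨0, fun i => i.elim0, fun i => i.elim0, fun j => Or.inl (fun i => i.elim0)⟩
    obtain ⟨α, h1, h2⟩ := Nat.sSup_mem hne (bddAbove_mono n k A)
    have hle : m ≤ HLen n k A := hA.2
    refine ⟨fun i => α (Fin.castLE hle i), fun i => h1 _, fun j => ?_⟩
    rcases h2 j with h2 | h2
    · left
      intro a b hab
      exact h2 (show Fin.castLE hle a < Fin.castLE hle b from hab)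
    · right
      intro a b hab
      exact h2 (show Fin.castLE hle a < Fin.castLE hle b from hab)
  have h3 := (Nat.mul_le_mul_right (m.factorial ^ (k + 1)) hsub).trans h
  have h4 : ((((HDPerms n k).filter (fun A => m ≤ HLen n k A)).card * m.factorial ^ (k + 1) : ℕ) : ℝ)
    ≤ ((2 ^ (k + 1) * ((HDPerms n k).card * (n ^ k) ^ m) : ℕ) : ℝ) := by exact_mod_cast h3
  push_cast at h4
  linarith

lemma lower_final {n k : ℕ} (hk : 1 ≤ k) (y : ℝ) (hy : 100 ≤ y) (hyn : y ^ (k + 1) = n) :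
    (((HDPerms n k).filter (fun A => ¬ ((k : ℝ) + 2)⁻¹ * y ^ k ≤ (HLen n k A : ℝ))).card : ℝ)
      ≤ (HDPerms n k).card * ((1200 + 7200 * 3 ^ k + 240 * 9 ^ k) / y) := by
  have hy0 : 0 < y := by linarith
  have hyk : y ≤ y ^ k := by
    calc y = y ^ 1 := (pow_one y).symm
      _ ≤ y ^ k := pow_le_pow_right₀ (by linarith) hk
  set Y := y ^ k with hY
  have hYn : y * Y = n := by rw [← hyn, hY]; ring
  have hn2 : (2 : ℝ) ≤ n := by nlinarith
  have hn : 2 ≤ n := by exact_mod_cast hn2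
  obtain ⟨M, hMdef⟩ : ∃ M, M = ⌊Y / 2⌋₊ := ⟨_, rfl⟩
  have hM1 : (M : ℝ) ≤ Y / 2 := by rw [hMdef]; exact Nat.floor_le (by linarith)
  have hM2 : Y / 2 < M + 1 := by rw [hMdef]; exact Nat.lt_floor_add_one _
  have hM3 : Y / 3 ≤ M := by linarith
  have hM8 : (8 : ℝ) ≤ M := by linarith
  have hMpos : (0 : ℝ) < M := by linarith
  have hM2' : 2 ≤ M := by
    have : (2 : ℝ) ≤ M := by linarith
    exact_mod_cast this
  obtain ⟨s, hsdef⟩ : ∃ s, s = n / M := ⟨_, rfl⟩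
  have h1 : s * M ≤ n := by rw [hsdef]; exact Nat.div_mul_le_self n M
  have h2 : n < s * M + M := by rw [hsdef]; exact Nat.lt_div_mul_add (by omega)
  have h1r : (s : ℝ) * M ≤ n := by exact_mod_cast h1
  have h2r : (n : ℝ) < s * M + M := by exact_mod_cast h2
  have hs1 : 2 * y - 1 ≤ s := by
    by_contra hc
    push Not at hc
    have : (s + 1 : ℝ) * M ≤ (2 * y) * (Y / 2) := by
      apply mul_le_mul (by linarith) hM1 hMpos.le (by linarith)
    linarith
  have hs2 : (s : ℝ) ≤ 3 * y := by
    by_contra hc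
    push Not at hc
    have : 3 * y * M < s * M := mul_lt_mul_of_pos_right hc hMpos
    have : y * (Y / 3) ≤ y * M := mul_le_mul_of_nonneg_left hM3 hy0.le
    linarith
  have hsk1 : (3.5 : ℝ) * M ≤ (s : ℝ) ^ k := by
    have a : (1.75 * y) ^ k ≤ (s : ℝ) ^ k := pow_le_pow_left₀ (by linarith) (by linarith) k
    rw [mul_pow] at a
    have b : (1.75 : ℝ) ≤ 1.75 ^ k := by
      calc (1.75 : ℝ) = 1.75 ^ 1 := (pow_one _).symm
        _ ≤ 1.75 ^ k := pow_le_pow_right₀ (by norm_num) hk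
    have c : (1.75 : ℝ) * Y ≤ 1.75 ^ k * Y := mul_le_mul_of_nonneg_right b (by linarith)
    linarith
  have hsk2 : (s : ℝ) ^ k ≤ 3 ^ k * Y := by
    rw [hY, ← mul_pow]
    exact pow_le_pow_left₀ (Nat.cast_nonneg _) hs2 k
  have hlow := lower_count hn h1 h2.le hM2' hsk1
  have hG0 : (0 : ℝ) ≤ (HDPerms n k).card := Nat.cast_nonneg _
  refine le_trans ?_ (hlow.trans (mul_le_mul_of_nonneg_left ?_ hG0))
  · rw [Nat.cast_le]
    apply Finset.card_le_card
    intro A hA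
    rw [Finset.mem_filter] at hA ⊢
    refine ⟨hA.1, ?_⟩
    have h3 := not_le.mp hA.2
    have hk1 : (1 : ℝ) ≤ k := by exact_mod_cast hk
    have h4 : ((k : ℝ) + 2)⁻¹ ≤ 3⁻¹ := inv_anti₀ (by norm_num) (by linarith)
    have h5 : ((k : ℝ) + 2)⁻¹ * Y ≤ 3⁻¹ * Y := mul_le_mul_of_nonneg_right h4 (by linarith)
    linarith
  · have t3 : (0 : ℝ) < 3 ^ k := by positivity
    have t9 : (9 : ℝ) ^ k = 3 ^ k * 3 ^ k := by rw [← mul_pow]; norm_num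
    have hM1' : Y / 6 ≤ (M : ℝ) - 1 := by linarith
    have hm1 : (0 : ℝ) < (M : ℝ) - 1 := by linarith
    have e1 : (400 / (M : ℝ) ^ 2) * (M + M ^ 2 * ((s : ℝ) ^ k / (M * (M - 1))))
        = 400 / M + 400 * ((s : ℝ) ^ k / (M * (M - 1))) := by
      field_simp
    have b1 : 400 / (M : ℝ) ≤ 1200 / y := by
      rw [div_le_div_iff₀ hMpos hy0]; linarith
    have b2 : (s : ℝ) ^ k / (M * (M - 1)) ≤ 18 * 3 ^ k / y := by
      rw [div_le_div_iff₀ (mul_pos hMpos hm1) hy0]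
      have q1 : (Y / 3) * (y / 6) ≤ M * (M - 1) :=
        mul_le_mul hM3 (by linarith) (by linarith) hMpos.le
      calc (s : ℝ) ^ k * y ≤ (3 ^ k * Y) * y := mul_le_mul_of_nonneg_right hsk2 hy0.le
        _ = 18 * 3 ^ k * ((Y / 3) * (y / 6)) := by ring
        _ ≤ _ := mul_le_mul_of_nonneg_left q1 (by linarith)
    have b3 : 40 * ((s : ℝ) ^ k) ^ 2 / (M * (n - 1)) ≤ 240 * 9 ^ k / y := by
      rw [div_le_div_iff₀ (mul_pos hMpos (by linarith)) hy0, t9]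
      have q1 : (Y / 3) * ((y * Y) / 2) ≤ M * (n - 1) := by
        apply mul_le_mul hM3 (by linarith) (by positivity) hMpos.le
      have q2 : ((s : ℝ) ^ k) ^ 2 ≤ (3 ^ k * Y) ^ 2 := pow_le_pow_left₀ (by positivity) hsk2 2
      calc 40 * ((s : ℝ) ^ k) ^ 2 * y ≤ 40 * (3 ^ k * Y) ^ 2 * y := by
            apply mul_le_mul_of_nonneg_right _ hy0.le
            linarith
        _ = 240 * (3 ^ k * 3 ^ k) * ((Y / 3) * ((y * Y) / 2)) := by ring
        _ ≤ _ := mul_le_mul_of_nonneg_left q1 (by positivity)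
    rw [e1]
    have e2 : (1200 + 7200 * 3 ^ k + 240 * 9 ^ k) / y
        = 1200 / y + 400 * (18 * 3 ^ k / y) + 240 * 9 ^ k / y := by ring
    rw [e2]
    linarith

lemma upper_final {n k : ℕ} (eps : ℝ) (heps : 0 < eps) (y : ℝ) (hy : 0 ≤ y)
    (hyn : y ^ (k + 1) = n) :
    (((HDPerms n k).filter (fun A => ¬ (HLen n k A : ℝ) ≤ (Real.exp 1 + eps) * y ^ k)).card : ℝ)
      ≤ (HDPerms n k).card * (2 ^ (k + 1) *
        (Real.exp 1 / (Real.exp 1 + eps)) ^ (⌊(Real.exp 1 + eps) * y ^ k⌋₊ + 1)) := by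
  have he := Real.exp_pos 1
  set a := Real.exp 1 + eps with ha
  have ha0 : 0 < a := by linarith
  set Y := y ^ k with hY
  have hY0 : 0 ≤ Y := pow_nonneg hy k
  obtain ⟨m, hm⟩ : ∃ m, m = ⌊a * Y⌋₊ + 1 := ⟨_, rfl⟩
  rw [← hm]
  have hmY : a * Y ≤ m := by
    rw [hm]; push_cast; exact (Nat.lt_floor_add_one _).le
  have hG0 : (0 : ℝ) ≤ (HDPerms n k).card := Nat.cast_nonneg _
  have hf : (0 : ℝ) < (m.factorial : ℝ) := by exact_mod_cast Nat.factorial_pos m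
  have hup := upper_count' n k m
  have hsub : (((HDPerms n k).filter (fun A => ¬ (HLen n k A : ℝ) ≤ a * Y)).card : ℝ)
      ≤ (((HDPerms n k).filter (fun A => m ≤ HLen n k A)).card : ℝ) := by
    rw [Nat.cast_le]
    apply Finset.card_le_card
    intro A hA
    rw [Finset.mem_filter] at hA ⊢
    refine ⟨hA.1, ?_⟩
    have := (Nat.floor_lt (by positivity)).mpr (not_le.mp hA.2)
    omega
  refine hsub.trans ?_
  rw [← le_div_iff₀ (pow_pos hf _)] at hup
  refine hup.trans ?_
  rw [mul_div_assoc]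
  apply mul_le_mul_of_nonneg_left _ hG0
  rw [mul_div_assoc]
  apply mul_le_mul_of_nonneg_left _ (by positivity)
  have hq0 : 0 ≤ Real.exp 1 / a := by positivity
  have hq1 : Real.exp 1 / a ≤ 1 := (div_le_one ha0).mpr (by linarith)
  have e1 : ((n : ℝ) ^ k) ^ m / (m.factorial : ℝ) ^ (k + 1) = (Y ^ m / m.factorial) ^ (k + 1) := by
    rw [div_pow, ← hyn, hY]
    congr 1
    simp only [← pow_mul]
    congr 1
    ring
  have h1 : Y ^ m / m.factorial ≤ (Real.exp 1 / a) ^ m := by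
    have h2 : (m : ℝ) ^ m / m.factorial ≤ Real.exp 1 ^ m := by
      rw [← Real.exp_nat_mul, mul_one]
      exact Real.pow_div_factorial_le_exp _ (Nat.cast_nonneg _) m
    rw [div_le_iff₀ hf] at h2 ⊢
    rw [div_pow, div_mul_eq_mul_div, le_div_iff₀ (pow_pos ha0 _), ← mul_pow]
    refine le_trans (pow_le_pow_left₀ (by positivity) ?_ m) h2
    linarith
  rw [e1]
  calc (Y ^ m / m.factorial) ^ (k + 1) ≤ ((Real.exp 1 / a) ^ m) ^ (k + 1) :=
        pow_le_pow_left₀ (by positivity) h1 _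
    _ ≤ ((Real.exp 1 / a) ^ m) ^ 1 :=
        pow_le_pow_of_le_one (by positivity) (pow_le_one₀ hq0 hq1) (by omega)
    _ = _ := pow_one _

/-- Asymptotically almost surely, a uniformly random `A ∈ L_n^k` satisfies
`H(A) n^{-k/(k+1)} ∈ [1/(k+2), e + ε]`. -/
theorem random_monotone_aas (k : ℕ) (hk : 1 ≤ k) (eps : ℝ) (heps : 0 < eps) :
    Filter.Tendsto (fun n : ℕ =>
      (((HDPerms n k).filter (fun A =>
          ((k : ℝ) + 2)⁻¹ * (n : ℝ) ^ ((k : ℝ) / ((k : ℝ) + 1)) ≤ (HLen n k A : ℝ) ∧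
          (HLen n k A : ℝ) ≤ (Real.exp 1 + eps) * (n : ℝ) ^ ((k : ℝ) / ((k : ℝ) + 1)))).card : ℝ)
        / ((HDPerms n k).card : ℝ))
      Filter.atTop (nhds 1) := by
  have hk1 : (0 : ℝ) < (k : ℝ) + 1 := by positivity
  let y : ℕ → ℝ := fun n => (n : ℝ) ^ (((k : ℝ) + 1)⁻¹)
  have hy0 : ∀ n, 0 ≤ y n := fun n => Real.rpow_nonneg (Nat.cast_nonneg _) _
  have hyn : ∀ n, (y n) ^ (k + 1) = n := by
    intro n
    simp only [y]
    rw [← Real.rpow_natCast, ← Real.rpow_mul (Nat.cast_nonneg _)]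
    push_cast
    rw [inv_mul_cancel₀ hk1.ne', Real.rpow_one]
  have hyk : ∀ n : ℕ, (n : ℝ) ^ ((k : ℝ) / ((k : ℝ) + 1)) = (y n) ^ k := by
    intro n
    simp only [y]
    rw [← Real.rpow_natCast, ← Real.rpow_mul (Nat.cast_nonneg _)]
    congr 1
    rw [div_eq_mul_inv, mul_comm]
  have hyt : Filter.Tendsto y Filter.atTop Filter.atTop :=
    (tendsto_rpow_atTop (inv_pos.mpr hk1)).comp tendsto_natCast_atTop_atTop
  simp only [hyk]
  have he := Real.exp_pos 1
  have ha0 : 0 < Real.exp 1 + eps := by linarith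
  let u : ℕ → ℝ := fun n => (1200 + 7200 * 3 ^ k + 240 * 9 ^ k) / y n
  let w : ℕ → ℝ := fun n => 2 ^ (k + 1) *
        (Real.exp 1 / (Real.exp 1 + eps)) ^ (⌊(Real.exp 1 + eps) * (y n) ^ k⌋₊ + 1)
  have hu : Filter.Tendsto u Filter.atTop (nhds 0) := hyt.const_div_atTop _
  have hw : Filter.Tendsto w Filter.atTop (nhds 0) := by
    have h1 : Filter.Tendsto (fun n => ⌊(Real.exp 1 + eps) * (y n) ^ k⌋₊ + 1)
        Filter.atTop Filter.atTop := by
      refine (Filter.tendsto_add_atTop_nat 1).comp ?_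
      apply tendsto_nat_floor_atTop.comp
      apply Filter.Tendsto.const_mul_atTop ha0
      exact (Filter.tendsto_pow_atTop (by omega)).comp hyt
    have h2 := (tendsto_pow_atTop_nhds_zero_of_lt_one
      (r := Real.exp 1 / (Real.exp 1 + eps)) (by positivity)
      ((div_lt_one ha0).mpr (by linarith))).comp h1
    have h3 := h2.const_mul ((2 : ℝ) ^ (k + 1))
    rw [mul_zero] at h3
    exact h3
  have hlim : Filter.Tendsto (fun n => 1 - u n - w n) Filter.atTop (nhds 1) := by
    have := (tendsto_const_nhds (x := (1 : ℝ))).sub hu |>.sub hw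
    simpa using this
  refine tendsto_of_tendsto_of_tendsto_of_le_of_le' hlim tendsto_const_nhds ?_ ?_
  · filter_upwards [hyt.eventually_ge_atTop 100, Filter.eventually_ge_atTop 1] with n hn hn1
    have hG : (0 : ℝ) < (HDPerms n k).card := by exact_mod_cast HDPerms_pos n k hn1
    have hl := lower_final hk (y n) hn (hyn n)
    have hup := upper_final eps heps (y n) (hy0 n) (hyn n)
    rw [le_div_iff₀ hG]
    have hc := Finset.card_filter_add_card_filter_not (s := HDPerms n k) (fun A =>
      ((k : ℝ) + 2)⁻¹ * (y n) ^ k ≤ (HLen n k A : ℝ) ∧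
          (HLen n k A : ℝ) ≤ (Real.exp 1 + eps) * (y n) ^ k)
    have hsub : ((HDPerms n k).filter (fun A => ¬ (((k : ℝ) + 2)⁻¹ * (y n) ^ k ≤ (HLen n k A : ℝ) ∧
          (HLen n k A : ℝ) ≤ (Real.exp 1 + eps) * (y n) ^ k))).card ≤
        ((HDPerms n k).filter (fun A => ¬ ((k : ℝ) + 2)⁻¹ * (y n) ^ k ≤ (HLen n k A : ℝ))).card +
        ((HDPerms n k).filter (fun A =>
          ¬ (HLen n k A : ℝ) ≤ (Real.exp 1 + eps) * (y n) ^ k)).card := by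
      refine le_trans (Finset.card_le_card ?_) (Finset.card_union_le _ _)
      intro A hA
      rw [Finset.mem_filter] at hA
      rw [Finset.mem_union, Finset.mem_filter, Finset.mem_filter]
      rcases not_and_or.mp hA.2 with h | h
      · exact Or.inl ⟨hA.1, h⟩
      · exact Or.inr ⟨hA.1, h⟩
    rify at hc hsub
    simp only [u, w]
    linarith
  · filter_upwards with n
    apply div_le_one_of_le₀ _ (Nat.cast_nonneg _)
    rw [Nat.cast_le]
    exact Finset.card_le_card (Finset.filter_subset _ _)
end

section
/- Fix k ≥ 1. The average of H(A) over all A ∈ L_n^k, multiplied by n^{-k/(k+1)}, has limsup at most e as n → ∞; i.e., limsup_{n→∞} n^{-k/(k+1)} · (1/|L_n^k|) · Σ_{A ∈ L_n^k} H(A) ≤ e. -/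
open scoped Classical

lemma aux_perm_count (n m : ℕ) (b : Fin m → Fin n) :
    m.factorial * (Finset.univ.filter (fun σ : Equiv.Perm (Fin n) =>
      StrictMono (fun i => σ (b i)))).card ≤ n.factorial := by
  by_cases hb : Function.Injective b
  · set T := Finset.univ.filter (fun σ : Equiv.Perm (Fin n) => StrictMono (fun i => σ (b i)))
    let f : Fin m ↪ Fin n := ⟨b, hb⟩
    have h1 : ((Finset.univ : Finset (Equiv.Perm (Fin m))) ×ˢ T).card ≤
        (Finset.univ : Finset (Equiv.Perm (Fin n))).card := by
      apply Finset.card_le_card_of_injOn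
        (fun p => p.2 * Equiv.Perm.viaFintypeEmbedding p.1 f) (by intro x _; simp)
      rintro ⟨τ, σ⟩ h ⟨τ', σ'⟩ h' heq
      simp only [T, Finset.coe_product, Set.mem_prod, Finset.mem_coe, Finset.mem_univ,
        Finset.mem_filter, true_and] at h h'
      dsimp only at heq
      have key : ∀ i, σ (b (τ i)) = σ' (b (τ' i)) := by
        intro i
        have := congrArg (fun g : Equiv.Perm (Fin n) => g (f i)) heq
        simp only [Equiv.Perm.mul_apply, Equiv.Perm.viaFintypeEmbedding_apply_image] at this
        exact this
      have hr : Set.range (fun i => σ (b i)) = Set.range (fun i => σ' (b i)) := by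
        have e1 : Set.range (fun i => σ (b i)) = Set.range (fun i => σ (b (τ i))) :=
          (τ.surjective.range_comp (fun i => σ (b i))).symm
        have e2 : Set.range (fun i => σ' (b i)) = Set.range (fun i => σ' (b (τ' i))) :=
          (τ'.surjective.range_comp (fun i => σ' (b i))).symm
        rw [e1, e2]
        congr 1
        funext i
        exact key i
      have hfun := (StrictMono.range_inj h h').1 hr
      have hτ : τ = τ' := by
        ext i : 1
        have h3 := key i
        have h4 := congrFun hfun (τ i)
        rw [h4] at h3
        exact hb (σ'.injective h3)
      subst hτ
      have := mul_right_cancel heq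
      rw [this]
    rw [Finset.card_product, Finset.card_univ, Finset.card_univ, Fintype.card_perm,
      Fintype.card_perm, Fintype.card_fin, Fintype.card_fin] at h1
    exact h1
  · rw [Finset.filter_false_of_mem]
    · simp
    · intro σ _ hσ
      apply hb
      intro i j hij
      exact hσ.injective (by simp [hij])

lemma aux_perm_count_anti (n m : ℕ) (b : Fin m → Fin n) :
    m.factorial * (Finset.univ.filter (fun σ : Equiv.Perm (Fin n) =>
      StrictAnti (fun i => σ (b i)))).card ≤ n.factorial := by
  refine le_trans (Nat.mul_le_mul_left _ ?_) (aux_perm_count n m b)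
  apply Finset.card_le_card_of_injOn (fun σ => Fin.revPerm * σ)
  · intro σ hσ
    simp only [Finset.coe_filter, Finset.mem_univ, true_and, Set.mem_ofPred_eq] at hσ ⊢
    intro i j hij
    simpa using hσ hij
  · intro σ _ σ' _ h
    exact mul_left_cancel h

noncomputable def auxS (n k m : ℕ) (β : Fin m → (Fin (k + 1) → Fin n)) :
    Finset (Fin (k + 1) → Equiv.Perm (Fin n)) :=
  Fintype.piFinset (fun j => Finset.univ.filter (fun σ : Equiv.Perm (Fin n) =>
    StrictMono (fun i => σ (β i j)) ∨ StrictAnti (fun i => σ (β i j))))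

lemma auxS_card (n k m : ℕ) (β : Fin m → (Fin (k + 1) → Fin n)) :
    m.factorial ^ (k + 1) * (auxS n k m β).card ≤ (2 * n.factorial) ^ (k + 1) := by
  unfold auxS
  rw [Fintype.card_piFinset]
  have : ∀ c : ℕ, c ^ (k + 1) = ∏ _j : Fin (k + 1), c := by intro c; simp
  rw [this, this, ← Finset.prod_mul_distrib]
  apply Finset.prod_le_prod'
  intro j _
  rw [Finset.filter_or]
  calc _ ≤ m.factorial * (_ + _) := Nat.mul_le_mul_left _ (Finset.card_union_le _ _)
    _ ≤ _ := by
      rw [mul_add, two_mul]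
      exact add_le_add (aux_perm_count n m fun i => β i j) (aux_perm_count_anti n m fun i => β i j)

def auxAct {n k : ℕ} (σ : Fin (k + 1) → Equiv.Perm (Fin n)) (A : (Fin (k + 1) → Fin n) → Bool) :
    (Fin (k + 1) → Fin n) → Bool := fun x => A (fun j => (σ j).symm (x j))

lemma auxAct_mem {n k : ℕ} (σ : Fin (k + 1) → Equiv.Perm (Fin n))
    {A : (Fin (k + 1) → Fin n) → Bool} (hA : IsHDPerm n k A) : IsHDPerm n k (auxAct σ A) := by
  intro j x
  have key : ∀ t, auxAct σ A (Function.update x j t) =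
      A (Function.update (fun i => (σ i).symm (x i)) j ((σ j).symm t)) := by
    intro t
    unfold auxAct
    congr 1
    funext i
    by_cases h : i = j
    · subst h; simp
    · simp [h]
  obtain ⟨t, ht, hu⟩ := hA j (fun i => (σ i).symm (x i))
  refine ⟨σ j t, ?_, ?_⟩
  · simp only [key]; simpa using ht
  · intro s hs
    simp only [key] at hs
    rw [← hu _ hs]; simp

noncomputable def auxBad (n k m : ℕ) : Finset ((Fin (k + 1) → Fin n) → Bool) :=
  (HDPerms n k).filter (fun A => ∃ α, IsMonoSub n k m A α)

noncomputable def auxG {n k : ℕ} (A : (Fin (k + 1) → Fin n) → Bool) :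
    Finset (Fin (k + 1) → Fin n) := Finset.univ.filter (fun x => A x = true)

lemma auxG_card {n k : ℕ} {A : (Fin (k + 1) → Fin n) → Bool} (hA : IsHDPerm n k A) :
    (auxG A).card ≤ n ^ k := by
  have h : (auxG A).card ≤ (Finset.univ : Finset (Fin k → Fin n)).card := by
    apply Finset.card_le_card_of_injOn (fun x => Fin.tail x) (by intro x _; simp)
    intro x hx y hy hxy
    simp only [auxG, Finset.coe_filter, Finset.mem_univ, true_and, Set.mem_ofPred_eq] at hx hy
    have hy' : Function.update x 0 (y 0) = y := by
      funext i
      refine Fin.cases (by simp) (fun i => ?_) i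
      have := congrFun hxy i
      simpa [Fin.tail] using this
    have := (hA 0 x).unique (y₁ := x 0) (y₂ := y 0) (by simpa using hx) (by rw [hy']; exact hy)
    rw [← hy', ← this]; simp
  simpa using h

lemma auxBad_card_le (n k m : ℕ) (σ : Fin (k + 1) → Equiv.Perm (Fin n)) :
    (auxBad n k m).card ≤ ((HDPerms n k).filter (fun A => auxAct σ A ∈ auxBad n k m)).card := by
  have hinv : ∀ A, auxAct σ (auxAct (fun j => (σ j).symm) A) = A := by
    intro A; funext x; simp [auxAct]
  apply Finset.card_le_card_of_injOn (fun A => auxAct (fun j => (σ j).symm) A)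
  · intro A hA
    have hA' : A ∈ auxBad n k m := hA
    simp only [Finset.coe_filter, Set.mem_ofPred_eq, hinv]
    refine ⟨?_, hA'⟩
    simp only [auxBad, HDPerms, Finset.mem_filter, Finset.mem_univ, true_and] at hA' ⊢
    exact auxAct_mem _ hA'.1
  · intro A _ B _ h
    have := congrArg (auxAct σ) h
    simpa only [hinv] using this

lemma auxSigma (n k m : ℕ) {A : (Fin (k + 1) → Fin n) → Bool} (hA : IsHDPerm n k A) :
    m.factorial ^ (k + 1) * (Finset.univ.filter (fun σ : Fin (k + 1) → Equiv.Perm (Fin n) =>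
      auxAct σ A ∈ auxBad n k m)).card ≤ (n ^ k) ^ m * (2 * n.factorial) ^ (k + 1) := by
  have hsub : (Finset.univ.filter (fun σ : Fin (k + 1) → Equiv.Perm (Fin n) =>
      auxAct σ A ∈ auxBad n k m)) ⊆
      (Fintype.piFinset (fun _ : Fin m => auxG A)).biUnion (auxS n k m) := by
    intro σ hσ
    simp only [auxBad, Finset.mem_filter, Finset.mem_univ, true_and] at hσ
    obtain ⟨-, α, h1, h2⟩ := hσ
    simp only [Finset.mem_biUnion, Fintype.mem_piFinset]
    refine ⟨fun i j => (σ j).symm (α i j), ?_, ?_⟩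
    · intro i; simpa [auxG, auxAct] using h1 i
    · simpa [auxS] using h2
  calc _ ≤ m.factorial ^ (k + 1) * ∑ β ∈ Fintype.piFinset (fun _ : Fin m => auxG A),
        (auxS n k m β).card :=
        Nat.mul_le_mul_left _ ((Finset.card_le_card hsub).trans Finset.card_biUnion_le)
    _ = ∑ β ∈ Fintype.piFinset (fun _ : Fin m => auxG A),
        m.factorial ^ (k + 1) * (auxS n k m β).card := by rw [Finset.mul_sum]
    _ ≤ ∑ β ∈ Fintype.piFinset (fun _ : Fin m => auxG A), (2 * n.factorial) ^ (k + 1) :=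
        Finset.sum_le_sum fun β _ => auxS_card n k m β
    _ = (auxG A).card ^ m * (2 * n.factorial) ^ (k + 1) := by simp
    _ ≤ _ := Nat.mul_le_mul_right _ (Nat.pow_le_pow_left (auxG_card hA) _)

lemma auxBad_bound (n k m : ℕ) :
    m.factorial ^ (k + 1) * (auxBad n k m).card ≤
      (HDPerms n k).card * ((n ^ k) ^ m * 2 ^ (k + 1)) := by
  have hpos : 0 < n.factorial ^ (k + 1) := pow_pos n.factorial_pos _
  refine Nat.le_of_mul_le_mul_left ?_ hpos
  have hc : n.factorial ^ (k + 1) =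
      (Finset.univ : Finset (Fin (k + 1) → Equiv.Perm (Fin n))).card := by
    simp [Fintype.card_perm]
  calc n.factorial ^ (k + 1) * (m.factorial ^ (k + 1) * (auxBad n k m).card)
      = m.factorial ^ (k + 1) * ∑ σ : Fin (k + 1) → Equiv.Perm (Fin n),
          (auxBad n k m).card := by
        rw [Finset.sum_const, smul_eq_mul, ← hc]; ring
    _ ≤ m.factorial ^ (k + 1) * ∑ σ : Fin (k + 1) → Equiv.Perm (Fin n),
        ((HDPerms n k).filter (fun A => auxAct σ A ∈ auxBad n k m)).card :=
        Nat.mul_le_mul_left _ (Finset.sum_le_sum fun σ _ => auxBad_card_le n k m σ)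
    _ = m.factorial ^ (k + 1) * ∑ A ∈ HDPerms n k,
        (Finset.univ.filter (fun σ : Fin (k + 1) → Equiv.Perm (Fin n) =>
          auxAct σ A ∈ auxBad n k m)).card := by
        congr 1
        simp only [Finset.card_filter]
        exact Finset.sum_comm
    _ ≤ ∑ A ∈ HDPerms n k, (n ^ k) ^ m * (2 * n.factorial) ^ (k + 1) := by
        rw [Finset.mul_sum]
        refine Finset.sum_le_sum fun A hA => auxSigma n k m ?_
        simpa [HDPerms] using hA
    _ = _ := by
        rw [Finset.sum_const, smul_eq_mul, mul_pow]; ring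

lemma auxLe {n k m : ℕ} {A : (Fin (k + 1) → Fin n) → Bool} {α : Fin m → (Fin (k + 1) → Fin n)}
    (h : IsMonoSub n k m A α) : m ≤ n := by
  have : Function.Injective (fun i => α i 0) := by
    rcases h.2 0 with h | h
    · exact h.injective
    · exact h.injective
  simpa using Fintype.card_le_of_injective _ this

lemma auxH_mem (n k : ℕ) (A : (Fin (k + 1) → Fin n) → Bool) :
    ∃ α : Fin (HLen n k A) → (Fin (k + 1) → Fin n), IsMonoSub n k (HLen n k A) A α := by
  have := Nat.sSup_mem (s := {m : ℕ | ∃ α : Fin m → (Fin (k + 1) → Fin n), IsMonoSub n k m A α})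
    ⟨0, Fin.elim0, fun i => i.elim0, fun j => Or.inl fun i => i.elim0⟩
    ⟨n, by rintro m ⟨α, h⟩; exact auxLe h⟩
  exact this

lemma auxH_le (n k : ℕ) (A : (Fin (k + 1) → Fin n) → Bool) : HLen n k A ≤ n := by
  obtain ⟨α, h⟩ := auxH_mem n k A
  exact auxLe h

lemma auxH_bad {n k m : ℕ} {A : (Fin (k + 1) → Fin n) → Bool} (hA : A ∈ HDPerms n k)
    (hm : m ≤ HLen n k A) : A ∈ auxBad n k m := by
  obtain ⟨α, h1, h2⟩ := auxH_mem n k A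
  simp only [auxBad, Finset.mem_filter]
  refine ⟨hA, fun i => α (Fin.castLE hm i), fun i => h1 _, fun j => ?_⟩
  have hs := Fin.strictMono_castLE hm
  rcases h2 j with h | h
  · exact Or.inl (h.comp hs)
  · exact Or.inr (h.comp_strictMono hs)

lemma auxSum (n k m : ℕ) : ∑ A ∈ HDPerms n k, HLen n k A ≤
    (HDPerms n k).card * m + n * (auxBad n k m).card := by
  have hb : auxBad n k m = (HDPerms n k).filter (fun A => A ∈ auxBad n k m) := by
    ext A; simp only [auxBad, Finset.mem_filter]; tauto
  rw [hb, Finset.card_filter, Finset.mul_sum, ← smul_eq_mul, ← Finset.sum_const,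
    ← Finset.sum_add_distrib]
  refine Finset.sum_le_sum fun A hA => ?_
  by_cases h : m ≤ HLen n k A
  · rw [if_pos (auxH_bad hA h)]
    have := auxH_le n k A
    omega
  · omega

lemma auxAvg (n k m : ℕ) :
    (∑ A ∈ HDPerms n k, (HLen n k A : ℝ)) / ((HDPerms n k).card : ℝ) ≤
      m + n * (((n : ℝ) ^ k) ^ m * 2 ^ (k + 1) / (m.factorial : ℝ) ^ (k + 1)) := by
  have hf : (0 : ℝ) < (m.factorial : ℝ) ^ (k + 1) := by positivity
  apply div_le_of_le_mul₀ (by positivity) (by positivity)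
  have h1 : (∑ A ∈ HDPerms n k, (HLen n k A : ℝ)) ≤
    (HDPerms n k).card * m + n * (auxBad n k m).card := by exact_mod_cast auxSum n k m
  have h2 : (m.factorial : ℝ) ^ (k + 1) * (auxBad n k m).card ≤
      (HDPerms n k).card * (((n : ℝ) ^ k) ^ m * 2 ^ (k + 1)) := by
    exact_mod_cast auxBad_bound n k m
  have h3 : ((auxBad n k m).card : ℝ) ≤
      (HDPerms n k).card * (((n : ℝ) ^ k) ^ m * 2 ^ (k + 1) / (m.factorial : ℝ) ^ (k + 1)) := by
    rw [← mul_div_assoc, le_div_iff₀ hf]; linarith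
  have h4 := mul_le_mul_of_nonneg_left h3 (Nat.cast_nonneg (α := ℝ) n)
  linarith

/-- analytic bound on the tail probability -/
lemma auxTail (n k m : ℕ) (c : ℝ) (hc : Real.exp 1 < c) (hm0 : 1 ≤ m)
    (hm : c * (n : ℝ) ^ ((k : ℝ) / ((k : ℝ) + 1)) ≤ m) :
    ((n : ℝ) ^ k) ^ m * 2 ^ (k + 1) / (m.factorial : ℝ) ^ (k + 1) ≤
      2 ^ (k + 1) * (Real.exp 1 / c) ^ m := by
  have he := Real.exp_pos 1
  have hc0 : 0 < c := he.trans hc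
  have hmp : (0 : ℝ) < m := by exact_mod_cast hm0
  set s := (n : ℝ) ^ ((k : ℝ) / ((k : ℝ) + 1)) with hs
  have hs0 : 0 ≤ s := by positivity
  have hnk : (n : ℝ) ^ k = s ^ (k + 1) := by
    rw [hs, ← Real.rpow_natCast, ← Real.rpow_natCast, ← Real.rpow_mul (by positivity)]
    congr 1
    push_cast
    field_simp
  have hsm : s ≤ m / c := by rw [le_div_iff₀ hc0]; linarith
  have hfac : (m : ℝ) ^ m / m.factorial ≤ Real.exp 1 ^ m := by
    rw [← Real.exp_nat_mul, mul_one]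
    exact Real.pow_div_factorial_le_exp (m : ℝ) hmp.le m
  have hfp : (0 : ℝ) < m.factorial := by positivity
  have h1 : s ^ m / m.factorial ≤ (Real.exp 1 / c) ^ m := by
    calc s ^ m / m.factorial ≤ (m / c) ^ m / m.factorial := by gcongr
      _ = ((m : ℝ) ^ m / m.factorial) / c ^ m := by rw [div_pow]; ring
      _ ≤ Real.exp 1 ^ m / c ^ m := by gcongr
      _ = _ := by rw [div_pow]
  have hr1 : (Real.exp 1 / c) ^ m ≤ 1 := pow_le_one₀ (by positivity) ((div_le_one hc0).2 hc.le)
  have hr0 : 0 ≤ (Real.exp 1 / c) ^ m := by positivity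
  calc ((n : ℝ) ^ k) ^ m * 2 ^ (k + 1) / (m.factorial : ℝ) ^ (k + 1)
      = 2 ^ (k + 1) * (s ^ m / m.factorial) ^ (k + 1) := by
        rw [hnk, div_pow, ← pow_mul, ← pow_mul, mul_comm (k + 1) m]; ring
    _ ≤ 2 ^ (k + 1) * ((Real.exp 1 / c) ^ m) ^ (k + 1) := by gcongr
    _ ≤ 2 ^ (k + 1) * (Real.exp 1 / c) ^ m := by
        gcongr
        exact pow_le_of_le_one hr0 hr1 (Nat.succ_ne_zero k)

/-- `limsup_{n → ∞} n^{-k/(k+1)} E[H_n^k] ≤ e`. -/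
theorem expectation_upper (k : ℕ) (hk : 1 ≤ k) :
    Filter.limsup (fun n : ℕ =>
      (n : ℝ) ^ (-((k : ℝ) / ((k : ℝ) + 1))) *
        ((∑ A ∈ HDPerms n k, (HLen n k A : ℝ)) / ((HDPerms n k).card : ℝ)))
      Filter.atTop ≤ Real.exp 1 := by
  apply le_of_forall_pos_le_add
  intro ε hε
  have hk1 : (1 : ℝ) ≤ k := by exact_mod_cast hk
  have hcob : Filter.IsCoboundedUnder (· ≤ ·) Filter.atTop (fun n : ℕ =>
      (n : ℝ) ^ (-((k : ℝ) / ((k : ℝ) + 1))) *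
        ((∑ A ∈ HDPerms n k, (HLen n k A : ℝ)) / ((HDPerms n k).card : ℝ))) := by
    apply Filter.IsBoundedUnder.isCoboundedUnder_le
    refine ⟨0, Filter.eventually_map.2 (Filter.Eventually.of_forall fun n => ?_)⟩
    change (0 : ℝ) ≤ _ * _
    positivity
  apply Filter.limsup_le_of_le hcob
  set p : ℝ := (k : ℝ) / ((k : ℝ) + 1) with hp
  have hp0 : 0 < p := by positivity
  have hp2 : 1 / 2 ≤ p := by
    rw [hp, div_le_div_iff₀ (by norm_num) (by positivity)]; linarith
  set c : ℝ := Real.exp 1 + ε / 2 with hcdef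
  have hc : Real.exp 1 < c := by rw [hcdef]; linarith
  have he := Real.exp_pos 1
  have he1 : 1 ≤ Real.exp 1 := Real.one_le_exp (by norm_num)
  have hc0 : 0 < c := he.trans hc
  set r := Real.exp 1 / c with hr
  have hr0 : 0 ≤ r := by positivity
  have hr1 : r < 1 := (div_lt_one hc0).2 hc
  have htp : Filter.Tendsto (fun n : ℕ => (n : ℝ) ^ p) Filter.atTop Filter.atTop :=
    (tendsto_rpow_atTop hp0).comp tendsto_natCast_atTop_atTop
  have htm : Filter.Tendsto (fun n : ℕ => ⌈c * (n : ℝ) ^ p⌉₊) Filter.atTop Filter.atTop :=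
    tendsto_nat_ceil_atTop.comp (htp.const_mul_atTop hc0)
  have hlim := (tendsto_pow_const_mul_const_pow_of_abs_lt_one 2
    (by rwa [abs_of_nonneg hr0] : |r| < 1)).comp htm
  have hlim2 := hlim.const_mul ((2 : ℝ) ^ (k + 1))
  rw [mul_zero] at hlim2
  have hlim3 : Filter.Tendsto (fun n : ℕ => ((n : ℝ) ^ p)⁻¹) Filter.atTop (nhds 0) :=
    htp.inv_tendsto_atTop
  filter_upwards [hlim2.eventually (gt_mem_nhds (show (0 : ℝ) < ε / 4 by positivity)),
    hlim3.eventually (gt_mem_nhds (show (0 : ℝ) < ε / 4 by positivity)),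
    Filter.eventually_ge_atTop 1] with n h1 h2 hn
  have hn1 : (1 : ℝ) ≤ n := by exact_mod_cast hn
  dsimp only [Function.comp] at h1
  set m := ⌈c * (n : ℝ) ^ p⌉₊ with hm
  have hx1 : 1 ≤ (n : ℝ) ^ p := Real.one_le_rpow hn1 hp0.le
  have hcm : c * (n : ℝ) ^ p ≤ m := Nat.le_ceil _
  have hmc : (m : ℝ) < c * (n : ℝ) ^ p + 1 := Nat.ceil_lt_add_one (by positivity)
  have hxm : (n : ℝ) ^ p ≤ m := by nlinarith
  have hm1 : 1 ≤ m := by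
    have : (1 : ℝ) ≤ m := hx1.trans hxm
    exact_mod_cast this
  have hnm : (n : ℝ) ≤ (m : ℝ) ^ 2 := by
    calc (n : ℝ) = ((n : ℝ) ^ (1 / 2 : ℝ)) ^ 2 := by
          rw [← Real.rpow_natCast, ← Real.rpow_mul (by positivity)]; norm_num
      _ ≤ ((n : ℝ) ^ p) ^ 2 := by gcongr
      _ ≤ _ := by gcongr
  have hT := auxTail n k m c hc hm1 hcm
  have hA := auxAvg n k m
  have hB : (n : ℝ) * (((n : ℝ) ^ k) ^ m * 2 ^ (k + 1) / (m.factorial : ℝ) ^ (k + 1)) ≤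
      ε / 4 := by
    calc _ ≤ (m : ℝ) ^ 2 * (2 ^ (k + 1) * r ^ m) := by gcongr
      _ = 2 ^ (k + 1) * ((m : ℝ) ^ 2 * r ^ m) := by ring
      _ ≤ _ := h1.le
  have hx0 : 0 < (n : ℝ) ^ p := by linarith
  rw [Real.rpow_neg (by positivity), inv_mul_le_iff₀ hx0]
  have h2' : 1 ≤ (n : ℝ) ^ p * (ε / 4) := by
    have := mul_le_mul_of_nonneg_left h2.le hx0.le
    rwa [mul_inv_cancel₀ hx0.ne'] at this
  have h3 : ε / 4 ≤ (n : ℝ) ^ p * (ε / 4) := by nlinarith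
  have h4 : (n : ℝ) ^ p * (Real.exp 1 + ε) =
      c * (n : ℝ) ^ p + (n : ℝ) ^ p * (ε / 4) + (n : ℝ) ^ p * (ε / 4) := by
    rw [hcdef]; ring
  linarith
end
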